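/- arXiv:2007.08075 — 10 statements merged into one kernel-verified Lean document; each statement's English description precedes it below -/
import Mathlib

section
/- Let H = (V, E) be a finite hypergraph in which every hyperedge e ∈ E has |e| ≥ 2 and carries a submodular cardinality-based splitting function w_e. Then for every ε > 0 there exist a finite auxiliary node set A with |A| ≤ Σ_{e∈E} 2·(1 + ⌈log_{1+ε}|e|⌉) and a weight function ŵ : (V ∪ A) × (V ∪ A) → ℝ≥0 whose number of nonzero values is at most Σ_{e∈E} (2|e| + 1)·(1 + ⌈log_{1+ε}|e|⌉), such that for every S ⊆ V we have cut_H(S) ≤ min_{T ⊆ A} dircut_ŵ(S ∪ T) ≤ (1+ε)·cut_H(S). -/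
/-- Directed cut value of a weighted directed graph on a finite node set. -/
noncomputable def dirCut {N : Type*} [Fintype N] [DecidableEq N]
    (W : N → N → ℝ) (U : Finset N) : ℝ :=
  ∑ u ∈ U, ∑ v ∈ Uᶜ, W u v

/-- Nonnegative combination of truncations representing a concave monotone sequence. -/
lemma conc_rep (r : ℕ) : ∀ (g : ℕ → ℝ), g 0 = 0 →
    (∀ j, 1 ≤ j → j + 1 ≤ r → g (j - 1) + g (j + 1) ≤ 2 * g j) →
    (1 ≤ r → g (r - 1) ≤ g r) →
    ∃ c : ℕ → ℝ, (∀ j, 0 ≤ c j) ∧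
      ∀ i ≤ r, g i = ∑ j ∈ Finset.range r, c j * min (i : ℝ) ((j : ℝ) + 1) := by
  induction r with
  | zero =>
    intro g g0 _ _
    refine ⟨fun _ => 0, fun _ => le_refl _, fun i hi => ?_⟩
    have : i = 0 := by omega
    subst this
    simpa using g0
  | succ r ih =>
    intro g g0 hc hm
    have hd : 0 ≤ g (r + 1) - g r := by
      have := hm (by omega)
      simp only [Nat.add_sub_cancel] at this
      linarith
    obtain ⟨d, hdd⟩ : ∃ d, d = g (r + 1) - g r := ⟨_, rfl⟩
    obtain ⟨c, hc0, hci⟩ := ih (fun i => g i - d * i) (by simp [g0])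
      (by
        intro j h1 h2
        have := hc j h1 (by omega)
        obtain ⟨k, rfl⟩ : ∃ k, j = k + 1 := ⟨j - 1, by omega⟩
        simp only [Nat.add_sub_cancel] at this ⊢
        push_cast
        linarith)
      (by
        intro h1
        have := hc r h1 (by omega)
        obtain ⟨k, rfl⟩ : ∃ k, r = k + 1 := ⟨r - 1, by omega⟩
        simp only [Nat.add_sub_cancel] at this ⊢
        push_cast
        linarith)
    refine ⟨fun j => if j < r then c j else d, fun j => ?_, fun i hi => ?_⟩
    · show 0 ≤ if j < r then c j else d
      split_ifs
      · exact hc0 j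
      · rw [hdd]; exact hd
    · rw [Finset.sum_range_succ]
      have e1 : ∑ j ∈ Finset.range r, (if j < r then c j else d) * min (i : ℝ) ((j : ℝ) + 1)
          = ∑ j ∈ Finset.range r, c j * min (i : ℝ) ((j : ℝ) + 1) := by
        apply Finset.sum_congr rfl
        intro j hj
        rw [if_pos (Finset.mem_range.mp hj)]
      rw [e1]
      have hi' : (i : ℝ) ≤ (r : ℝ) + 1 := by exact_mod_cast hi
      simp only [lt_irrefl, if_false]
      rw [min_eq_left hi']
      rcases Nat.lt_or_ge r i with h | h
      · have : i = r + 1 := by omega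
        subst this
        have h2 := hci r le_rfl
        have e2 : ∑ j ∈ Finset.range r, c j * min ((r + 1 : ℕ) : ℝ) ((j : ℝ) + 1)
            = ∑ j ∈ Finset.range r, c j * min (r : ℝ) ((j : ℝ) + 1) := by
          apply Finset.sum_congr rfl
          intro j hj
          have hj : (j : ℝ) + 1 ≤ r := by exact_mod_cast Finset.mem_range.mp hj
          rw [min_eq_right hj, min_eq_right (by push_cast; linarith)]
        rw [e2, ← h2]
        push_cast
        rw [hdd]; ring
      · rw [← hci i h]; ring

lemma approx_w (n : ℕ) (hn : 2 ≤ n) (w : ℕ → ℝ) (hw0 : w 0 = 0)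
    (hsym : ∀ j, j ≤ n → w j = w (n - j))
    (hsub : ∀ j, 1 ≤ j → j + 1 ≤ n → w (j - 1) + w (j + 1) ≤ 2 * w j)
    (ε : ℝ) (hε : 0 < ε) (K : ℕ) (hK : Real.logb (1 + ε) (n : ℝ) ≤ K) :
    ∃ a : Fin (K + 1) → ℝ, (∀ k, 0 ≤ a k) ∧ ∀ i ≤ n,
      w i ≤ ∑ k, a k * min (min (i : ℝ) ((n : ℝ) - i)) ((1 + ε) ^ (k : ℕ)) ∧
      ∑ k, a k * min (min (i : ℝ) ((n : ℝ) - i)) ((1 + ε) ^ (k : ℕ)) ≤ (1 + ε) * w i := by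
  obtain ⟨c, hc0, hc⟩ := conc_rep (n / 2) w hw0
    (fun j h1 h2 => hsub j h1 (by omega))
    (by
      intro h
      have h1 := hsub (n / 2) h (by omega)
      have h2 := hsym (n / 2 + 1) (by omega)
      rcases Nat.even_or_odd' n with ⟨q, hq | hq⟩
      · have : n - (n / 2 + 1) = n / 2 - 1 := by omega
        rw [this] at h2
        linarith
      · have : n - (n / 2 + 1) = n / 2 := by omega
        rw [this] at h2
        linarith)
  have hκ : ∀ j : ℕ, ∃ k : Fin (K + 1), j < n / 2 →
      (1 + ε) ^ (k : ℕ) ≤ (j : ℝ) + 1 ∧ (j : ℝ) + 1 ≤ (1 + ε) * (1 + ε) ^ (k : ℕ) := by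
    intro j
    by_cases hj : j < n / 2
    · obtain ⟨k, hk1, hk2⟩ := exists_nat_pow_near (x := (j : ℝ) + 1) (y := 1 + ε)
        (by have : (0 : ℝ) ≤ j := Nat.cast_nonneg j
            linarith) (by linarith)
      have hkK : k ≤ K := by
        have h1 : (j : ℝ) + 1 ≤ n := by
          have : j + 1 ≤ n := by omega
          exact_mod_cast this
        have h2 : ((k : ℕ) : ℝ) ≤ Real.logb (1 + ε) n := by
          rw [Real.le_logb_iff_rpow_le (by linarith) (by positivity), Real.rpow_natCast]
          linarith
        exact_mod_cast h2.trans hK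
      refine ⟨⟨k, by omega⟩, fun _ => ⟨hk1, ?_⟩⟩
      rw [pow_succ] at hk2
      show _ ≤ (1 + ε) * (1 + ε) ^ k
      linarith
    · exact ⟨0, fun h => absurd h hj⟩
  choose κ hκ using hκ
  have key : ∀ i ≤ n / 2,
      w i ≤ ∑ j ∈ Finset.range (n / 2), (1 + ε) * c j * min (i : ℝ) ((1 + ε) ^ (κ j : ℕ)) ∧
      ∑ j ∈ Finset.range (n / 2), (1 + ε) * c j * min (i : ℝ) ((1 + ε) ^ (κ j : ℕ))
        ≤ (1 + ε) * w i := by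
    intro i hi
    rw [hc i hi, Finset.mul_sum]
    have hi0 : (0 : ℝ) ≤ i := Nat.cast_nonneg i
    constructor
    · apply Finset.sum_le_sum
      intro j hj
      obtain ⟨h1, h2⟩ := hκ j (Finset.mem_range.mp hj)
      have : min (i : ℝ) ((j : ℝ) + 1) ≤ (1 + ε) * min (i : ℝ) ((1 + ε) ^ (κ j : ℕ)) := by
        rw [mul_min_of_nonneg _ _ (by linarith)]
        apply min_le_min _ h2
        nlinarith
      calc _ ≤ c j * ((1 + ε) * min (i : ℝ) ((1 + ε) ^ (κ j : ℕ))) :=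
            mul_le_mul_of_nonneg_left this (hc0 j)
        _ = _ := by ring
    · apply Finset.sum_le_sum
      intro j hj
      obtain ⟨h1, h2⟩ := hκ j (Finset.mem_range.mp hj)
      rw [← mul_assoc]
      apply mul_le_mul_of_nonneg_left _ (mul_nonneg (by linarith) (hc0 j))
      exact min_le_min le_rfl h1
  refine ⟨fun k => ∑ j ∈ Finset.range (n / 2), if κ j = k then (1 + ε) * c j else 0,
    fun k => Finset.sum_nonneg fun j _ => ?_, ?_⟩
  · split_ifs
    · exact mul_nonneg (by linarith) (hc0 j)
    · exact le_rfl
  · have swap : ∀ x : ℝ, ∑ k : Fin (K + 1),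
        (∑ j ∈ Finset.range (n / 2), if κ j = k then (1 + ε) * c j else 0)
          * min x ((1 + ε) ^ (k : ℕ))
        = ∑ j ∈ Finset.range (n / 2), (1 + ε) * c j * min x ((1 + ε) ^ (κ j : ℕ)) := by
      intro x
      simp_rw [Finset.sum_mul]
      rw [Finset.sum_comm]
      apply Finset.sum_congr rfl
      intro j _
      simp [ite_mul]
    intro i hi
    simp only [swap]
    rcases Nat.lt_or_ge (n / 2) i with h | h
    · have h1 : ((n - i : ℕ) : ℝ) = (n : ℝ) - i := by push_cast [hi]; ring
      have h2 : (n : ℝ) - i ≤ i := by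
        rw [← h1]
        have : n - i ≤ i := by omega
        exact_mod_cast this
      rw [min_eq_right h2, ← h1, hsym i hi]
      exact key (n - i) (by omega)
    · have h1 : ((n - i : ℕ) : ℝ) = (n : ℝ) - i := by push_cast [hi]; ring
      have h2 : (i : ℝ) ≤ (n : ℝ) - i := by
        rw [← h1]
        have : i ≤ n - i := by omega
        exact_mod_cast this
      rw [min_eq_left h2]
      exact key i h

/-- The sparsifier weights on `V ⊕ Fin m`, with `Fin m` identified with `X × Bool`. -/
noncomputable def gadW {V X : Type*} [DecidableEq V] [DecidableEq X] {m : ℕ}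
    (φ : Fin m ≃ X × Bool) (f : X → Finset V) (a b : X → ℝ) :
    (V ⊕ Fin m) → (V ⊕ Fin m) → ℝ
  | Sum.inl _, Sum.inl _ => 0
  | Sum.inl v, Sum.inr p => if (φ p).2 = false ∧ v ∈ f (φ p).1 then a (φ p).1 else 0
  | Sum.inr p, Sum.inl v => if (φ p).2 = true ∧ v ∈ f (φ p).1 then a (φ p).1 else 0
  | Sum.inr p, Sum.inr q =>
      if (φ p).2 = false ∧ (φ q).2 = true ∧ (φ p).1 = (φ q).1 then a (φ p).1 * b (φ p).1 else 0

lemma gadW_nonneg {V X : Type*} [DecidableEq V] [DecidableEq X] {m : ℕ}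
    (φ : Fin m ≃ X × Bool) (f : X → Finset V) (a b : X → ℝ)
    (ha : ∀ x, 0 ≤ a x) (hb : ∀ x, 0 ≤ b x) (u v) : 0 ≤ gadW φ f a b u v := by
  rcases u with u | u <;> rcases v with v | v <;> simp only [gadW] <;>
    first
    | exact le_rfl
    | (split_ifs
       · first
         | exact ha _
         | exact mul_nonneg (ha _) (hb _)
       · exact le_rfl)

lemma gadW_ncard {V X : Type*} [Fintype V] [DecidableEq V] [Fintype X] [DecidableEq X] {m : ℕ}
    (φ : Fin m ≃ X × Bool) (f : X → Finset V) (a b : X → ℝ) :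
    {p : (V ⊕ Fin m) × (V ⊕ Fin m) | gadW φ f a b p.1 p.2 ≠ 0}.ncard
      ≤ ∑ x, (2 * (f x).card + 1) := by
  classical
  let F : X → Finset ((V ⊕ Fin m) × (V ⊕ Fin m)) := fun x =>
    ((f x).image (fun v => (Sum.inl v, Sum.inr (φ.symm (x, false)))) ∪
     (f x).image (fun v => (Sum.inr (φ.symm (x, true)), Sum.inl v))) ∪
     {(Sum.inr (φ.symm (x, false)), Sum.inr (φ.symm (x, true)))}
  have hsub : {p : (V ⊕ Fin m) × (V ⊕ Fin m) | gadW φ f a b p.1 p.2 ≠ 0}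
      ⊆ ((Finset.univ.biUnion F : Finset _) : Set ((V ⊕ Fin m) × (V ⊕ Fin m))) := by
    rintro ⟨u, v⟩ h
    simp only [Set.mem_setOf_eq] at h
    rw [Finset.mem_coe, Finset.mem_biUnion]
    rcases u with u | u <;> rcases v with v | v <;> simp only [gadW] at h
    · exact absurd rfl h
    · rw [ne_eq, ite_eq_right_iff, Classical.not_imp] at h
      obtain ⟨⟨h1, h2⟩, -⟩ := h
      refine ⟨(φ v).1, Finset.mem_univ _, ?_⟩
      have : φ.symm ((φ v).1, false) = v := by rw [← h1]; simp
      simp [F, this, h2]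
    · rw [ne_eq, ite_eq_right_iff, Classical.not_imp] at h
      obtain ⟨⟨h1, h2⟩, -⟩ := h
      refine ⟨(φ u).1, Finset.mem_univ _, ?_⟩
      have : φ.symm ((φ u).1, true) = u := by rw [← h1]; simp
      simp [F, this, h2]
    · rw [ne_eq, ite_eq_right_iff, Classical.not_imp] at h
      obtain ⟨⟨h1, h2, h3⟩, -⟩ := h
      refine ⟨(φ u).1, Finset.mem_univ _, ?_⟩
      have e1 : φ.symm ((φ u).1, false) = u := by rw [← h1]; simp
      have e2 : φ.symm ((φ u).1, true) = v := by rw [h3, ← h2]; simp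
      simp [F, e1, e2]
  calc _ ≤ ((Finset.univ.biUnion F : Finset _) : Set ((V ⊕ Fin m) × (V ⊕ Fin m))).ncard :=
        Set.ncard_le_ncard hsub (Finset.finite_toSet _)
    _ = (Finset.univ.biUnion F).card := Set.ncard_coe_finset _
    _ ≤ ∑ x, (F x).card := Finset.card_biUnion_le
    _ ≤ _ := by
        apply Finset.sum_le_sum
        intro x _
        have h1 := Finset.card_union_le
          ((f x).image (fun v => ((Sum.inl v : V ⊕ Fin m), (Sum.inr (φ.symm (x, false)) : V ⊕ Fin m))) ∪
           (f x).image (fun v => ((Sum.inr (φ.symm (x, true)) : V ⊕ Fin m), (Sum.inl v : V ⊕ Fin m))))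
          {(Sum.inr (φ.symm (x, false)), Sum.inr (φ.symm (x, true)))}
        have h2 := Finset.card_union_le
          ((f x).image (fun v => ((Sum.inl v : V ⊕ Fin m), (Sum.inr (φ.symm (x, false)) : V ⊕ Fin m))))
          ((f x).image (fun v => ((Sum.inr (φ.symm (x, true)) : V ⊕ Fin m), (Sum.inl v : V ⊕ Fin m))))
        have h3 := Finset.card_image_le (s := f x)
          (f := fun v => ((Sum.inl v : V ⊕ Fin m), (Sum.inr (φ.symm (x, false)) : V ⊕ Fin m)))
        have h4 := Finset.card_image_le (s := f x)
          (f := fun v => ((Sum.inr (φ.symm (x, true)) : V ⊕ Fin m), (Sum.inl v : V ⊕ Fin m)))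
        rw [Finset.card_singleton] at h1
        show Finset.card (_ ∪ _) ≤ _
        omega

/-- Cost of a single gadget. -/
noncomputable def gadCost (i n a b : ℝ) (t0 t1 : Prop) [Decidable t0] [Decidable t1] : ℝ :=
  (if t0 then 0 else a * i) + (if t0 ∧ ¬ t1 then a * b else 0) + (if t1 then a * (n - i) else 0)

lemma gadW_cut {V X : Type*} [Fintype V] [DecidableEq V] [Fintype X] [DecidableEq X] {m : ℕ}
    (φ : Fin m ≃ X × Bool) (f : X → Finset V) (a b : X → ℝ) (S : Finset V) (T : Finset (Fin m)) :
    dirCut (gadW φ f a b) (S.image Sum.inl ∪ T.image Sum.inr)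
      = ∑ x, gadCost ((S ∩ f x).card) ((f x).card) (a x) (b x)
          (φ.symm (x, false) ∈ T) (φ.symm (x, true) ∈ T) := by
  have h0 : dirCut (gadW φ f a b) (S.image Sum.inl ∪ T.image Sum.inr)
      = ∑ u, ∑ v, if u ∈ (S.image Sum.inl ∪ T.image Sum.inr) ∧
          v ∉ (S.image Sum.inl ∪ T.image Sum.inr) then gadW φ f a b u v else 0 := by
    unfold dirCut
    rw [← Finset.sum_filter_of_ne (s := Finset.univ)
      (p := fun u => u ∈ (S.image Sum.inl ∪ T.image Sum.inr))]
    · rw [Finset.filter_mem_eq_inter, Finset.univ_inter]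
      apply Finset.sum_congr rfl
      intro u hu
      rw [← Finset.sum_filter]
      apply Finset.sum_congr _ (fun _ _ => rfl)
      ext v
      simp only [hu, true_and, Finset.mem_filter, Finset.mem_univ, Finset.mem_compl]
    · intro u _ h
      by_contra hu
      apply h
      simp only [hu, false_and, if_false, Finset.sum_const_zero]
  rw [h0, Fintype.sum_sum_type]
  simp only [Fintype.sum_sum_type, Finset.mem_union, Finset.mem_image, Sum.inl.injEq,
    Sum.inr.injEq, exists_eq_right, reduceCtorEq, and_false, exists_false, or_false, false_or, gadW,
    ite_self, Finset.sum_const_zero, zero_add]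
  rw [Finset.sum_comm, Finset.sum_add_distrib]
  have E : ∀ g : Fin m → ℝ, ∑ p, g p = ∑ x, (g (φ.symm (x, false)) + g (φ.symm (x, true))) := by
    intro g
    rw [← Equiv.sum_comp φ.symm, Fintype.sum_prod_type]
    apply Finset.sum_congr rfl
    intro x _
    rw [Fintype.sum_bool, add_comm]
  simp only [E, Equiv.apply_symm_apply]
  simp only [reduceCtorEq, false_and, true_and, if_false, ite_self, Finset.sum_const_zero, add_zero,
    zero_add, ← Finset.sum_add_distrib]
  apply Finset.sum_congr rfl
  intro x _
  have e1 : (∑ v : V, if v ∈ S ∧ φ.symm (x, false) ∉ T then if v ∈ f x then a x else 0 else 0)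
      = if φ.symm (x, false) ∈ T then 0 else a x * ((S ∩ f x).card : ℝ) := by
    split_ifs with h
    · simp [h]
    · simp only [h, not_false_eq_true, and_true, ← ite_and]
      rw [← Finset.sum_filter, Finset.sum_const, nsmul_eq_mul, mul_comm]
      congr 3
      ext v; simp
  have e2 : (∑ v : V, if φ.symm (x, true) ∈ T ∧ v ∉ S then if v ∈ f x then a x else 0 else 0)
      = if φ.symm (x, true) ∈ T then a x * (((f x).card : ℝ) - ((S ∩ f x).card : ℝ)) else 0 := by
    split_ifs with h
    · simp only [h, true_and, ← ite_and]
      rw [← Finset.sum_filter, Finset.sum_const, nsmul_eq_mul, mul_comm]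
      congr 1
      have : (S ∩ f x).card + (f x \ S).card = (f x).card := by
        rw [Finset.inter_comm, Finset.card_inter_add_card_sdiff]
      rw [← this]
      push_cast
      rw [add_sub_cancel_left]
      congr 2
      ext v; simp [and_comm]
    · simp [h]
  have e3 : (∑ y : X, if φ.symm (x, false) ∈ T ∧ φ.symm (y, true) ∉ T then
        if x = y then a x * b x else 0 else 0)
      = if φ.symm (x, false) ∈ T ∧ φ.symm (x, true) ∉ T then a x * b x else 0 := by
    rw [Finset.sum_eq_single x]
    · simp
    · intro y _ hy
      simp [Ne.symm hy]
    · simp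
  simp only [gadCost]
  rw [e1, e2, e3]
  ring

lemma gadCost_ge (i n a b : ℝ) (ha : 0 ≤ a) (hi : 0 ≤ i) (hin : i ≤ n)
    (t0 t1 : Prop) [Decidable t0] [Decidable t1] :
    a * min (min i (n - i)) b ≤ gadCost i n a b t0 t1 := by
  have h1 : a * min (min i (n - i)) b ≤ a * i :=
    mul_le_mul_of_nonneg_left ((min_le_left _ _).trans (min_le_left _ _)) ha
  have h2 : a * min (min i (n - i)) b ≤ a * (n - i) :=
    mul_le_mul_of_nonneg_left ((min_le_left _ _).trans (min_le_right _ _)) ha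
  have h3 : a * min (min i (n - i)) b ≤ a * b :=
    mul_le_mul_of_nonneg_left (min_le_right _ _) ha
  have h4 : 0 ≤ a * (n - i) := mul_nonneg ha (by linarith)
  unfold gadCost
  by_cases p : t0 <;> by_cases q : t1 <;> simp only [p, q, if_true, if_false, not_true,
    not_false_eq_true, and_true, and_false, true_and, false_and] <;> linarith

lemma gadCost_le (i n a b : ℝ) : ∃ t : Bool → Bool,
    gadCost i n a b (t false = true) (t true = true) = a * min (min i (n - i)) b := by
  rcases le_total (min i (n - i)) b with h | h
  · rw [min_eq_left h]
    rcases le_total i (n - i) with h | h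
    · rw [min_eq_left h]
      exact ⟨fun _ => false, by simp [gadCost]⟩
    · rw [min_eq_right h]
      exact ⟨fun _ => true, by simp [gadCost]⟩
  · rw [min_eq_right h]
    exact ⟨fun s => !s, by simp [gadCost]⟩

/-- **Augmented cut sparsifiers for submodular cardinality-based hypergraph cuts.**
For a hypergraph `H = (V, E)` (hyperedges indexed by `ι`, each of size at least 2, carrying
a submodular cardinality-based splitting function `w i : ℕ → ℝ`) and any `ε > 0`, there is
an auxiliary node set `A = Fin m` with `m ≤ ∑_e 2(1 + ⌈log_{1+ε}|e|⌉)` and a nonnegative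
weight function on `(V ⊕ A) × (V ⊕ A)` with at most `∑_e (2|e|+1)(1 + ⌈log_{1+ε}|e|⌉)`
nonzero values, whose augmented cut function `(1+ε)`-approximates the hypergraph cut. -/
theorem augmented_sparsifier_scb
    {V : Type*} [Fintype V] [DecidableEq V]
    {ι : Type*} [Fintype ι]
    (e : ι → Finset V) (w : ι → ℕ → ℝ)
    (hsize : ∀ i, 2 ≤ (e i).card)
    (hw0 : ∀ i, w i 0 = 0)
    (hwtop : ∀ i, w i (e i).card = 0)
    (hnonneg : ∀ i j, j ≤ (e i).card → 0 ≤ w i j)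
    (hsym : ∀ i j, j ≤ (e i).card → w i j = w i ((e i).card - j))
    (hsubmod : ∀ i j, 1 ≤ j → j + 1 ≤ (e i).card →
      w i (j - 1) + w i (j + 1) ≤ 2 * w i j)
    (ε : ℝ) (hε : 0 < ε) :
    ∃ (m : ℕ) (W : (V ⊕ Fin m) → (V ⊕ Fin m) → ℝ),
      (∀ u v, 0 ≤ W u v) ∧
      (m : ℝ) ≤ ∑ i, 2 * (1 + (⌈Real.logb (1 + ε) ((e i).card : ℝ)⌉ : ℝ)) ∧
      (({p : (V ⊕ Fin m) × (V ⊕ Fin m) | W p.1 p.2 ≠ 0}.ncard : ℝ)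
        ≤ ∑ i, (2 * ((e i).card : ℝ) + 1) *
            (1 + (⌈Real.logb (1 + ε) ((e i).card : ℝ)⌉ : ℝ))) ∧
      ∀ S : Finset V,
        (∑ i, w i ((S ∩ e i).card))
          ≤ (⨅ T : Finset (Fin m), dirCut W (S.image Sum.inl ∪ T.image Sum.inr)) ∧
        (⨅ T : Finset (Fin m), dirCut W (S.image Sum.inl ∪ T.image Sum.inr))
          ≤ (1 + ε) * ∑ i, w i ((S ∩ e i).card) := by
  classical
  have hlog : ∀ i, 0 ≤ ⌈Real.logb (1 + ε) ((e i).card : ℝ)⌉ := by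
    intro i
    apply Int.ceil_nonneg
    apply Real.logb_nonneg (by linarith)
    have := hsize i
    have : 1 ≤ (e i).card := by omega
    exact_mod_cast this
  choose K hK using fun i => Int.eq_ofNat_of_zero_le (hlog i)
  have hKr : ∀ i, (⌈Real.logb (1 + ε) ((e i).card : ℝ)⌉ : ℝ) = (K i : ℝ) := by
    intro i
    rw [hK i]
    simp
  choose a ha hap using fun i => approx_w (e i).card (hsize i) (w i) (hw0 i) (hsym i)
    (hsubmod i) ε hε (K i) (by rw [← hKr i]; exact Int.le_ceil _)
  let X := Σ i : ι, Fin (K i + 1)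
  let φ : Fin (Fintype.card (X × Bool)) ≃ X × Bool := (Fintype.equivFin (X × Bool)).symm
  let f : X → Finset V := fun x => e x.1
  let A : X → ℝ := fun x => a x.1 x.2
  let B : X → ℝ := fun x => (1 + ε) ^ (x.2 : ℕ)
  have hA : ∀ x, 0 ≤ A x := fun x => ha _ _
  have hB : ∀ x, 0 ≤ B x := fun x => pow_nonneg (by linarith) _
  refine ⟨Fintype.card (X × Bool), gadW φ f A B, gadW_nonneg φ f A B hA hB, ?_, ?_, ?_⟩
  · apply le_of_eq
    simp only [hKr]
    rw [Fintype.card_prod, Fintype.card_sigma, Fintype.card_bool]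
    simp only [Fintype.card_fin]
    push_cast
    rw [Finset.sum_mul]
    apply Finset.sum_congr rfl
    intro i _
    ring
  · refine (Nat.cast_le.mpr (gadW_ncard φ f A B)).trans (le_of_eq ?_)
    simp only [hKr]
    rw [Fintype.sum_sigma]
    simp only [f, Finset.sum_const, Finset.card_univ, Fintype.card_fin]
    push_cast
    apply Finset.sum_congr rfl
    intro i _
    simp only [smul_eq_mul]
    push_cast
    ring
  · intro S
    have hmin : ∀ i, (S ∩ e i).card ≤ (e i).card :=
      fun i => Finset.card_le_card Finset.inter_subset_right
    have hsum : ∑ x : X, A x * min (min ((S ∩ f x).card : ℝ) (((f x).card : ℝ) - (S ∩ f x).card)) (B x)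
        = ∑ i, ∑ k, a i k * min (min ((S ∩ e i).card : ℝ) (((e i).card : ℝ) - (S ∩ e i).card))
            ((1 + ε) ^ (k : ℕ)) := by
      rw [Fintype.sum_sigma]
    constructor
    · apply le_ciInf
      intro T
      rw [gadW_cut]
      calc _ ≤ _ := Finset.sum_le_sum fun i _ => (hap i _ (hmin i)).1
        _ = _ := hsum.symm
        _ ≤ _ := Finset.sum_le_sum fun x _ =>
            gadCost_ge _ _ _ _ (hA x) (Nat.cast_nonneg _) (Nat.cast_le.mpr (hmin x.1)) _ _
    · choose t ht using fun x : X => gadCost_le ((S ∩ f x).card : ℝ) ((f x).card : ℝ) (A x) (B x)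
      refine (ciInf_le (Set.finite_range _).bddBelow
        (Finset.univ.filter fun p => t (φ p).1 (φ p).2 = true)).trans ?_
      rw [gadW_cut]
      simp only [Finset.mem_filter, Finset.mem_univ, true_and, Equiv.apply_symm_apply]
      calc _ = ∑ x : X, A x * min (min ((S ∩ f x).card : ℝ)
                (((f x).card : ℝ) - (S ∩ f x).card)) (B x) := by
              apply Finset.sum_congr rfl
              intro x _
              rw [← ht x]
        _ = _ := hsum
        _ ≤ _ := Finset.sum_le_sum fun i _ => (hap i _ (hmin i)).2
        _ = _ := by rw [Finset.mul_sum]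
end

section
/- For every ε > 0, every integer r ≥ 1, and every r-SCB integer function w, there exists an r-CCB function ŵ of order J ≤ 1 + ⌈log_{1+ε} r⌉ such that w(i) ≤ ŵ(i) ≤ (1+ε)·w(i) for all i ∈ {0,1,…,r}. -/
/-- An `r`-SCB integer function: `w 0 = 0`, `w` is nonnegative and nondecreasing on
`{0,…,r}`, and `2·w(j) ≥ w(j-1) + w(j+1)` for `1 ≤ j ≤ r-1`. -/
def IsSCB (r : ℕ) (w : ℕ → ℝ) : Prop :=
  w 0 = 0 ∧ (∀ i, i < r → w i ≤ w (i + 1)) ∧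
    ∀ j, 1 ≤ j → j + 1 ≤ r → w (j - 1) + w (j + 1) ≤ 2 * w j

/-- An `r`-CCB function of order `J`: on `{0,…,r}` it has the form
`ŵ(i) = ∑_{j} a_j · min(i, b_j)` with `a_j > 0` and `0 < b_1 < … < b_J ≤ r`. -/
def IsCCB (r J : ℕ) (what : ℕ → ℝ) : Prop :=
  ∃ a b : Fin J → ℝ,
    (∀ j, 0 < a j) ∧ (∀ j, 0 < b j) ∧ StrictMono b ∧ (∀ j, b j ≤ (r : ℝ)) ∧
    ∀ i : ℕ, i ≤ r → what i = ∑ j, a j * min (i : ℝ) (b j)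

theorem scb_antitone {r : ℕ} {w : ℕ → ℝ} (hw : IsSCB r w) (i j : ℕ) (hij : i ≤ j) (hj : j < r) :
    w (j + 1) - w j ≤ w (i + 1) - w i := by
  induction j, hij using Nat.le_induction with
  | base => exact le_rfl
  | succ n hn ih =>
    have h1 := ih (by omega)
    have h2 := hw.2.2 (n + 1) (by omega) (by omega)
    simp only [Nat.add_sub_cancel] at h2
    linarith

theorem scb_mono {r : ℕ} {w : ℕ → ℝ} (hw : IsSCB r w) (i j : ℕ) (hij : i ≤ j) (hj : j ≤ r) :
    w i ≤ w j := by
  induction j, hij using Nat.le_induction with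
  | base => exact le_rfl
  | succ n hn ih =>
    have h1 := ih (by omega)
    have h2 := hw.2.1 n (by omega)
    linarith

theorem scb_up {r : ℕ} {w : ℕ → ℝ} (hw : IsSCB r w) (y z : ℕ) (hyz : y ≤ z) (hz : z ≤ r)
    (hy : y < r) : w z ≤ w y + (w (y + 1) - w y) * ((z : ℝ) - y) := by
  induction z, hyz using Nat.le_induction with
  | base => simp
  | succ n hn ih =>
    have h1 := ih (by omega)
    have h2 := scb_antitone hw y n hn (by omega)
    push_cast
    linarith

theorem scb_down {r : ℕ} {w : ℕ → ℝ} (hw : IsSCB r w) (y k : ℕ) (hk : k ≤ y)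
    (hy : y < r) : w (y - k) ≤ w y - (w (y + 1) - w y) * (k : ℝ) := by
  induction k with
  | zero => simp
  | succ n ih =>
    have h1 := ih (by omega)
    have h2 := scb_antitone hw (y - (n + 1)) y (by omega) (by omega)
    rw [show y - (n + 1) + 1 = y - n by omega] at h2
    push_cast
    linarith

theorem scb_chord {r : ℕ} {w : ℕ → ℝ} (hw : IsSCB r w) (x y z : ℕ) (hxy : x ≤ y) (hyz : y ≤ z)
    (hz : z ≤ r) :
    ((z : ℝ) - y) * w x + ((y : ℝ) - x) * w z ≤ ((z : ℝ) - x) * w y := by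
  rcases Nat.eq_or_lt_of_le hyz with h | h
  · subst h
    linarith
  · have h1 := scb_up hw y z hyz hz (by omega)
    have h2 := scb_down hw y (y - x) (by omega) (by omega)
    rw [Nat.sub_sub_self hxy, Nat.cast_sub hxy] at h2
    have hx' : (x : ℝ) ≤ y := by exact_mod_cast hxy
    have hz' : (y : ℝ) ≤ z := by exact_mod_cast hyz
    have h3 := mul_le_mul_of_nonneg_left h1 (sub_nonneg.2 hx')
    have h4 := mul_le_mul_of_nonneg_left h2 (sub_nonneg.2 hz')
    linarith

/-- Interpolation at a finite set of nodes by a nonnegative combination of `min (·) s`. -/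
theorem scb_interp (S : Finset ℕ) : (∀ s ∈ S, 0 < s) → ∀ w : ℕ → ℝ, IsSCB (S.sup id) w →
    ∃ a : ℕ → ℝ, (∀ s ∈ S, 0 ≤ a s) ∧
      (∀ i, (i ∈ S ∨ i = 0) → ∑ s ∈ S, a s * min (i : ℝ) s = w i) ∧
      ∀ i ≤ S.sup id, ∑ s ∈ S, a s * min (i : ℝ) s ≤ w i := by
  induction S using Finset.induction_on_max with
  | empty =>
    intro _ w hw
    refine ⟨fun _ => 0, by simp, ?_, ?_⟩
    · intro i hi
      simp at hi
      simp [hi, hw.1]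
    · intro i hi
      simp at hi
      simp [hi, hw.1]
  | insert M S hM ih =>
    intro hpos w hw
    have hMS : M ∉ S := fun h => lt_irrefl _ (hM M h)
    have hMpos : 0 < M := hpos M (Finset.mem_insert_self _ _)
    set m := S.sup id with hm
    have hmM : m < M := by
      rw [hm, Finset.sup_lt_iff hMpos]
      exact hM
    have hsup : (insert M S).sup id = M := by
      rw [Finset.sup_insert, ← hm]
      exact sup_eq_left.2 hmM.le
    rw [hsup] at hw ⊢
    have hle : ∀ s ∈ S, s ≤ m := fun s hs => Finset.le_sup (f := id) hs
    have hmS : m ∈ S ∨ m = 0 := by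
      rcases S.eq_empty_or_nonempty with h | h
      · right
        rw [hm, h]
        simp
      · left
        obtain ⟨x, hx, hx2⟩ := Finset.exists_mem_eq_sup S h id
        rw [hm, hx2]
        exact hx
    have hMm : (0 : ℝ) < (M : ℝ) - m := sub_pos.2 (by exact_mod_cast hmM)
    obtain ⟨σ, hσ⟩ : ∃ σ : ℝ, σ = (w M - w m) / ((M : ℝ) - m) := ⟨_, rfl⟩
    have hσe : σ * ((M : ℝ) - m) = w M - w m := by
      rw [hσ]
      field_simp
    have hσ0 : 0 ≤ σ := by
      rw [hσ]
      exact div_nonneg (sub_nonneg.2 (scb_mono hw m M hmM.le le_rfl)) hMm.le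
    have hσd : σ ≤ w (m + 1) - w m := by
      have h := scb_up hw m M hmM.le le_rfl hmM
      refine le_of_mul_le_mul_right ?_ hMm
      linarith
    have hw' : IsSCB m (fun i => w i - σ * i) := by
      refine ⟨by simp [hw.1], ?_, ?_⟩
      · intro i hi
        have := scb_antitone hw i m hi.le hmM
        push_cast
        linarith
      · intro j h1 h2
        have := hw.2.2 j h1 (by omega)
        obtain ⟨j, rfl⟩ : ∃ k, j = k + 1 := ⟨j - 1, by omega⟩
        simp only [Nat.add_sub_cancel] at this ⊢
        push_cast
        linarith
    obtain ⟨a, ha0, hai, hale⟩ := ih (fun s hs => hpos s (Finset.mem_insert_of_mem hs)) _ hw'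
    have hsum : ∀ i : ℕ, ∑ s ∈ insert M S, (if s = M then σ else a s) * min (i : ℝ) s
        = σ * min (i : ℝ) M + ∑ s ∈ S, a s * min (i : ℝ) s := by
      intro i
      rw [Finset.sum_insert hMS]
      congr 1
      · simp
      · apply Finset.sum_congr rfl
        intro s hs
        rw [if_neg (hM s hs).ne]
    have hbig : ∀ i : ℕ, m ≤ i → ∑ s ∈ S, a s * min (i : ℝ) s = w m - σ * m := by
      intro i hi
      rw [← hai m hmS]
      apply Finset.sum_congr rfl
      intro s hs
      have h1 : (s : ℝ) ≤ m := by exact_mod_cast hle s hs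
      have h2 : (m : ℝ) ≤ i := by exact_mod_cast hi
      rw [min_eq_right h1, min_eq_right (h1.trans h2)]
    refine ⟨fun s => if s = M then σ else a s, ?_, ?_, ?_⟩
    · intro s hs
      rcases Finset.mem_insert.1 hs with h | h
      · simp [h, hσ0]
      · simp only [if_neg (hM s h).ne]
        exact ha0 s h
    · intro i hi
      rw [hsum]
      by_cases hiM : i = M
      · subst hiM
        rw [hbig i hmM.le, min_self]
        linarith
      · have hi' : i ∈ S ∨ i = 0 := by
          rcases hi with h | h
          · exact Or.inl ((Finset.mem_insert.1 h).resolve_left hiM)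
          · exact Or.inr h
        have hiM' : i ≤ M := by
          rcases hi' with h | h
          · exact (hM i h).le
          · omega
        rw [hai i hi', min_eq_left (by exact_mod_cast hiM')]
        ring
    · intro i hi
      rw [hsum, min_eq_left (by exact_mod_cast hi)]
      rcases le_total i m with h | h
      · have := hale i h
        linarith
      · rw [hbig i h]
        have h1 := scb_chord hw m i M h hi le_rfl
        refine le_of_mul_le_mul_left ?_ hMm
        have h2 : w M = w m + σ * ((M : ℝ) - m) := by linarith
        rw [h2] at h1
        linarith

/-- **Sparse CCB approximation of SCB functions.** For every `ε > 0`, `r ≥ 1`, and every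
`r`-SCB integer function `w`, there is an `r`-CCB function `ŵ` of order
`J ≤ 1 + ⌈log_{1+ε} r⌉` with `w(i) ≤ ŵ(i) ≤ (1+ε)·w(i)` for all `i ∈ {0,…,r}`. -/
theorem sparse_ccb_approximation (ε : ℝ) (hε : 0 < ε) (r : ℕ) (hr : 1 ≤ r)
    (w : ℕ → ℝ) (hw : IsSCB r w) :
    ∃ (J : ℕ) (what : ℕ → ℝ),
      (J : ℤ) ≤ 1 + ⌈Real.logb (1 + ε) (r : ℝ)⌉ ∧
      IsCCB r J what ∧
      ∀ i ≤ r, w i ≤ what i ∧ what i ≤ (1 + ε) * w i := by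
  have h1ε : (1 : ℝ) < 1 + ε := by linarith
  have hr1 : (1 : ℝ) ≤ r := by exact_mod_cast hr
  have hlog : 0 ≤ Real.logb (1 + ε) (r : ℝ) := Real.logb_nonneg h1ε hr1
  have hceil : 0 ≤ ⌈Real.logb (1 + ε) (r : ℝ)⌉ := Int.ceil_nonneg hlog
  obtain ⟨L, hL⟩ := Int.eq_ofNat_of_zero_le hceil
  have hLr : (r : ℝ) ≤ (1 + ε) ^ L := by
    have h := Int.le_ceil (Real.logb (1 + ε) (r : ℝ))
    rw [hL, Real.logb_le_iff_le_rpow h1ε (by linarith)] at h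
    simpa using h
  set n : ℕ → ℕ := fun k => min ⌈(1 + ε) ^ k⌉₊ r with hn
  have hn0 : n 0 = 1 := by
    simp [hn, hr]
  have hnL : n L = r := by
    apply min_eq_right
    exact_mod_cast hLr.trans (Nat.le_ceil _)
  have hnpos : ∀ k, 0 < n k := fun k =>
    lt_min (Nat.ceil_pos.2 (by positivity)) hr
  have hnr : ∀ k, n k ≤ r := fun k => min_le_right _ _
  set S := (Finset.range (L + 1)).image n with hS
  have hmem : ∀ k ≤ L, n k ∈ S := fun k hk =>
    Finset.mem_image_of_mem _ (Finset.mem_range.2 (by omega))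
  have hSle : ∀ s ∈ S, s ≤ r := by
    intro s hs
    obtain ⟨k, -, rfl⟩ := Finset.mem_image.1 hs
    exact hnr k
  have hSpos : ∀ s ∈ S, 0 < s := by
    intro s hs
    obtain ⟨k, -, rfl⟩ := Finset.mem_image.1 hs
    exact hnpos k
  have hsup : S.sup id = r := by
    apply le_antisymm (Finset.sup_le hSle)
    have := Finset.le_sup (f := id) (hmem L le_rfl)
    rwa [hnL] at this
  have hcard : S.card ≤ L + 1 := by
    simpa using (Finset.card_image_le (s := Finset.range (L + 1)) (f := n))
  obtain ⟨a, ha0, hai, hale⟩ := scb_interp S hSpos w (by rw [hsup]; exact hw)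
  rw [hsup] at hale
  set T := S.filter (fun s => 0 < a s) with hT
  have hTS : T ⊆ S := Finset.filter_subset _ _
  refine ⟨T.card, fun i => (1 + ε) * ∑ s ∈ S, a s * min (i : ℝ) s, ?_, ?_, ?_⟩
  · rw [hL]
    have := (Finset.card_le_card hTS).trans hcard
    omega
  · refine ⟨fun j => (1 + ε) * a (T.orderEmbOfFin rfl j),
      fun j => ((T.orderEmbOfFin rfl j : ℕ) : ℝ), ?_, ?_, ?_, ?_, ?_⟩
    · intro j
      have := (Finset.mem_filter.1 (T.orderEmbOfFin_mem rfl j)).2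
      positivity
    · intro j
      exact Nat.cast_pos.2 <| hSpos _ (hTS (T.orderEmbOfFin_mem rfl j))
    · intro i j hij
      exact Nat.cast_lt.2 <| (T.orderEmbOfFin rfl).strictMono hij
    · intro j
      exact Nat.cast_le.2 <| hSle _ (hTS (T.orderEmbOfFin_mem rfl j))
    · intro i _
      have h1 : ∑ s ∈ S, a s * min (i : ℝ) s = ∑ s ∈ T, a s * min (i : ℝ) s := by
        symm
        apply Finset.sum_subset hTS
        intro s hs hsT
        have : a s = 0 := by
          apply le_antisymm _ (ha0 s hs)
          by_contra h
          exact hsT (Finset.mem_filter.2 ⟨hs, not_le.1 h⟩)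
        simp [this]
      have h2 : ∑ s ∈ T, a s * min (i : ℝ) s
          = ∑ j : Fin T.card, a (T.orderEmbOfFin rfl j) *
            min (i : ℝ) ((T.orderEmbOfFin rfl j : ℕ) : ℝ) := by
        conv_lhs => rw [← Finset.map_orderEmbOfFin_univ T rfl]
        rw [Finset.sum_map]
        rfl
      simp only [h1, h2, Finset.mul_sum, mul_assoc]
  · intro i hi
    refine ⟨?_, mul_le_mul_of_nonneg_left (hale i hi) (by linarith)⟩
    have hgm : ∀ k ≤ L, n k ≤ i →
        w (n k) ≤ ∑ s ∈ S, a s * min (i : ℝ) s := by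
      intro k hk hki
      rw [← hai _ (Or.inl (hmem k hk))]
      apply Finset.sum_le_sum
      intro s hs
      apply mul_le_mul_of_nonneg_left _ (ha0 s hs)
      exact min_le_min_right _ (by exact_mod_cast hki)
    have hwn : ∀ j ≤ r, 0 ≤ w j := fun j hj => by
      have := scb_mono hw 0 j (Nat.zero_le _) hj
      rwa [hw.1] at this
    rcases Nat.eq_zero_or_pos i with h0 | h0
    · subst h0
      have h := hai 0 (Or.inr rfl)
      rw [hw.1] at h
      show w 0 ≤ (1 + ε) * ∑ s ∈ S, a s * min ((0 : ℕ) : ℝ) s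
      rw [h, hw.1, mul_zero]
    · suffices h : ∃ k ≤ L, n k ≤ i ∧ w i ≤ (1 + ε) * w (n k) by
        obtain ⟨k, hk, hki, hwk⟩ := h
        exact hwk.trans (mul_le_mul_of_nonneg_left (hgm k hk hki) (by linarith))
      set k := Nat.findGreatest (fun k => n k ≤ i) L with hk
      have hkL : k ≤ L := Nat.findGreatest_le L
      have hki : n k ≤ i :=
        Nat.findGreatest_spec (P := fun k => n k ≤ i) (Nat.zero_le L) (by rw [hn0]; exact h0)
      refine ⟨k, hkL, hki, ?_⟩
      rcases Nat.eq_or_lt_of_le hkL with h | h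
      · have hir : i = n k := by
          rw [h, hnL] at hki ⊢
          omega
        rw [← hir]
        nlinarith [hwn i hi]
      · have hlt : i < n (k + 1) := by
          by_contra hcon
          exact Nat.findGreatest_is_greatest (P := fun k => n k ≤ i) (Nat.lt_succ_self k)
            h (not_lt.1 hcon)
        have h1 : (i : ℝ) < (1 + ε) ^ (k + 1) := Nat.lt_ceil.1 (lt_of_lt_of_le hlt (min_le_left _ _))
        have h2 : n k = ⌈(1 + ε) ^ k⌉₊ := by
          have h3 := hnr (k + 1)
          have h4 : n k = min ⌈(1 + ε) ^ k⌉₊ r := rfl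
          omega
        have h3 : (1 + ε) ^ k ≤ (n k : ℝ) := by
          rw [h2]
          exact Nat.le_ceil _
        have h4 : (i : ℝ) ≤ (1 + ε) * n k := by
          rw [pow_succ] at h1
          nlinarith
        have h5 := scb_chord hw 0 (n k) i (Nat.zero_le _) hki hi
        rw [hw.1] at h5
        simp only [Nat.cast_zero, sub_zero, mul_zero, zero_add] at h5
        have h6 : (0 : ℝ) < n k := by exact_mod_cast hnpos k
        refine le_of_mul_le_mul_left ?_ h6
        have h7 := mul_le_mul_of_nonneg_right h4 (hwn (n k) (hnr k))
        linarith
end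

section
/- Fix an r-SCB integer function w, ε ≥ 0, and ℓ ∈ {1,…,r}. Suppose p* is the largest integer in {ℓ,…,r} such that some admissible affine function g satisfies g(j) ≤ (1+ε)·w(j) for all j ∈ {ℓ,…,p*}, and let g* be an admissible function achieving this. If L̂ is an optimal linear cover of {p*+1,…,r} (the empty set when p* = r), then {g*} ∪ L̂ is an optimal linear cover of {ℓ,…,r}. -/
/-- Evaluation of an affine function represented as a (slope, intercept) pair. -/
def evalAff (g : ℝ × ℝ) (x : ℝ) : ℝ := g.1 * x + g.2

/-- An affine function `g(x) = m·x + d` with `m, d ≥ 0` is admissible for `w` if it upper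
bounds `w` at every integer in `{0,…,r}`. -/
def Admissible (r : ℕ) (w : ℕ → ℝ) (g : ℝ × ℝ) : Prop :=
  0 ≤ g.1 ∧ 0 ≤ g.2 ∧ ∀ i ≤ r, w i ≤ evalAff g i

/-- A finite set `L` of affine functions covers `R` if every `j ∈ R` is
`(1+ε)`-approximated by some `g ∈ L`. -/
def Covers (ε : ℝ) (w : ℕ → ℝ) (R : Finset ℕ) (L : Finset (ℝ × ℝ)) : Prop :=
  ∀ j ∈ R, ∃ g ∈ L, evalAff g j ≤ (1 + ε) * w j

/-- `L` is an optimal linear cover of `R` for `w`: all its elements are admissible, it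
covers `R`, and it has minimum cardinality among all such covers. -/
def IsOptimalCover (r : ℕ) (ε : ℝ) (w : ℕ → ℝ) (R : Finset ℕ) (L : Finset (ℝ × ℝ)) : Prop :=
  (∀ g ∈ L, Admissible r w g) ∧ Covers ε w R L ∧
    ∀ L' : Finset (ℝ × ℝ), (∀ g ∈ L', Admissible r w g) → Covers ε w R L' →
      L.card ≤ L'.card

theorem concave_fill (r : ℕ) (f : ℕ → ℝ)
    (hc : ∀ j, 1 ≤ j → j + 1 ≤ r → f (j - 1) + f (j + 1) ≤ 2 * f j)
    (a b : ℕ) (ha : 1 ≤ a) (hb : b ≤ r) (hfa : 0 ≤ f a) (hfb : 0 ≤ f b)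
    (k : ℕ) (hak : a ≤ k) (hkb : k ≤ b) : 0 ≤ f k := by
  have h1 : ∀ n, a ≤ n → n ≤ r → 0 ≤ f n ∨ (f n < 0 ∧ f n ≤ f (n - 1)) := by
    intro n hn
    induction n, hn using Nat.le_induction with
    | base => intro _; exact Or.inl hfa
    | succ n hn ih =>
      intro hr
      have hcn := hc n (by omega) hr
      rw [Nat.add_sub_cancel]
      rcases ih (by omega) with h | ⟨h, h'⟩
      · rcases le_or_gt 0 (f (n + 1)) with h2 | h2
        · exact Or.inl h2
        · exact Or.inr ⟨h2, by linarith⟩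
      · exact Or.inr ⟨by linarith, by linarith⟩
  rcases h1 k hak (by omega) with h | h
  · exact h
  · exfalso
    have h2 : ∀ n, k ≤ n → n ≤ r → (f n < 0 ∧ f n ≤ f (n - 1)) := by
      intro n hn
      induction n, hn using Nat.le_induction with
      | base => intro _; exact h
      | succ n hn ih =>
        intro hr
        have hcn := hc n (by omega) hr
        rw [Nat.add_sub_cancel]
        obtain ⟨h, h'⟩ := ih (by omega)
        exact ⟨by linarith, by linarith⟩
    have := (h2 b hkb hb).1
    linarith

/-- **Greedy choice yields an optimal linear cover (Lemma 3.3).** Fix an `r`-SCB integer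
function `w`, `ε ≥ 0`, and `ℓ ∈ {1,…,r}`. Suppose `p` is the largest integer in `{ℓ,…,r}`
such that some admissible affine function `(1+ε)`-covers all of `{ℓ,…,p}`, with `gstar`
achieving this maximum. If `Lhat` is an optimal linear cover of `{p+1,…,r}`, then
`{gstar} ∪ Lhat` is an optimal linear cover of `{ℓ,…,r}`. -/
theorem greedy_cover_optimal
    (r : ℕ) (ε : ℝ) (hε : 0 ≤ ε) (w : ℕ → ℝ) (hw : IsSCB r w)
    (ℓ p : ℕ) (hℓ : 1 ≤ ℓ) (hℓp : ℓ ≤ p) (hpr : p ≤ r)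
    (gstar : ℝ × ℝ) (hgadm : Admissible r w gstar)
    (hgcov : ∀ j ∈ Finset.Icc ℓ p, evalAff gstar j ≤ (1 + ε) * w j)
    (hmax : ∀ p', ℓ ≤ p' → p' ≤ r →
      (∃ g, Admissible r w g ∧ ∀ j ∈ Finset.Icc ℓ p', evalAff g j ≤ (1 + ε) * w j) →
      p' ≤ p)
    (Lhat : Finset (ℝ × ℝ))
    (hLhat : IsOptimalCover r ε w (Finset.Icc (p + 1) r) Lhat) :
    IsOptimalCover r ε w (Finset.Icc ℓ r) (insert gstar Lhat) := by
  classical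
  obtain ⟨hLa, hLc, hLm⟩ := hLhat
  refine ⟨?_, ?_, ?_⟩
  · intro g hg
    rcases Finset.mem_insert.1 hg with rfl | h
    · exact hgadm
    · exact hLa g h
  · intro j hj
    rw [Finset.mem_Icc] at hj
    by_cases hjp : j ≤ p
    · exact ⟨gstar, Finset.mem_insert_self _ _, hgcov j (Finset.mem_Icc.2 ⟨hj.1, hjp⟩)⟩
    · obtain ⟨g, hg, h⟩ := hLc j (Finset.mem_Icc.2 ⟨by omega, hj.2⟩)
      exact ⟨g, Finset.mem_insert_of_mem hg, h⟩
  · intro L' hA hC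
    obtain ⟨g, hg, hgl⟩ := hC ℓ (Finset.mem_Icc.2 ⟨le_rfl, by omega⟩)
    have key : ∀ j, p + 1 ≤ j → j ≤ r → ¬ evalAff g j ≤ (1 + ε) * w j := by
      intro j hj hjr hgj
      have := hmax j (by omega) hjr ⟨g, hA g hg, by
        intro k hk
        rw [Finset.mem_Icc] at hk
        have := concave_fill r (fun n => (1 + ε) * w n - evalAff g n) (by
          intro i hi hir
          obtain ⟨m, rfl⟩ : ∃ m, i = m + 1 := ⟨i - 1, by omega⟩
          have h := hw.2.2 (m + 1) hi hir
          simp only [Nat.add_sub_cancel, evalAff] at h ⊢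
          push_cast
          nlinarith [mul_le_mul_of_nonneg_left h (by linarith : 0 ≤ 1 + ε)])
          ℓ j hℓ hjr (by simpa using hgl) (by simpa using hgj) k hk.1 hk.2
        simpa using this⟩
      omega
    have h := hLm (L'.erase g) (fun x hx => hA x (Finset.mem_of_mem_erase hx)) (by
      intro j hj
      rw [Finset.mem_Icc] at hj
      obtain ⟨x, hx, hxj⟩ := hC j (Finset.mem_Icc.2 ⟨by omega, hj.2⟩)
      refine ⟨x, Finset.mem_erase.2 ⟨?_, hx⟩, hxj⟩
      rintro rfl
      exact key j hj.1 hj.2 hxj)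
    have h3 := Finset.card_erase_add_one hg
    have h4 := Finset.card_insert_le gstar Lhat
    omega
end

section
/- Let f : [0,∞) → ℝ be nondecreasing with f(0) ≥ 0, let y > 0, and let g be an affine function with g(0) ≥ 0, g(y) = f(y), and g(x) ≥ f(x) for all x ≥ 0. Then for every z ≥ y, f(z) ≤ g(z) ≤ (z/y)·f(z). In particular, a supporting line of a nonnegative nondecreasing concave function at the point y provides a (1+ε)-approximation of f at every z ∈ [y, (1+ε)·y]. -/
/-- **Key approximation estimate for supporting lines.** Let `f : [0,∞) → ℝ` be
nondecreasing with `f 0 ≥ 0`, let `y > 0`, and let `g(x) = m·x + d` be an affine function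
with `g(0) = d ≥ 0`, `g(y) = f(y)`, and `g(x) ≥ f(x)` for all `x ≥ 0`. Then for every
`z ≥ y` we have `f(z) ≤ g(z) ≤ (z/y)·f(z)`; in particular, for every `ε ≥ 0`, `g` is a
`(1+ε)`-approximation of `f` at every `z ∈ [y, (1+ε)·y]`. -/
theorem supporting_line_approximation
    (f : ℝ → ℝ) (hmono : MonotoneOn f (Set.Ici 0)) (hf0 : 0 ≤ f 0)
    (y : ℝ) (hy : 0 < y) (m d : ℝ) (hd : 0 ≤ d)
    (hgy : m * y + d = f y)
    (hub : ∀ x, 0 ≤ x → f x ≤ m * x + d) :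
    (∀ z, y ≤ z → f z ≤ m * z + d ∧ m * z + d ≤ (z / y) * f z) ∧
    (∀ ε : ℝ, 0 ≤ ε → ∀ z, y ≤ z → z ≤ (1 + ε) * y →
      m * z + d ≤ (1 + ε) * f z) := by
  have key : ∀ z, y ≤ z → m * z + d ≤ (z / y) * f z := by
    intro z hz
    have h1 : f y ≤ f z := hmono hy.le (hy.le.trans hz) hz
    have h2 : 1 ≤ z / y := (one_le_div hy).2 hz
    have h3 : (z / y) * f y ≤ (z / y) * f z :=
      mul_le_mul_of_nonneg_left h1 (by linarith)
    have h4 : (z / y) * f y = m * z + (z / y) * d := by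
      rw [← hgy]
      field_simp
    have h5 : 1 * d ≤ (z / y) * d := mul_le_mul_of_nonneg_right h2 hd
    linarith
  refine ⟨fun z hz => ⟨hub z (hy.le.trans hz), key z hz⟩, ?_⟩
  intro ε _ z hz hze
  have h0 : f 0 ≤ f z := hmono (Set.mem_Ici.2 le_rfl) (hy.le.trans hz) (hy.le.trans hz)
  have h1 : z / y ≤ 1 + ε := (div_le_iff₀ hy).2 hze
  exact (key z hz).trans (mul_le_mul_of_nonneg_right h1 (hf0.trans h0))
end

section
/- Let ε > 0, let r ≥ 1 be a real number, and let f : [0,r] → ℝ be concave, nondecreasing, and nonnegative with f(0) = 0. Then there exists a finite set L of affine functions with |L| ≤ max(1, ⌈log_{1+ε} r⌉) such that every g ∈ L satisfies g(x) ≥ f(x) for all x ∈ [0,r], and for every x ∈ [1,r] there exists g ∈ L with g(x) ≤ (1+ε)·f(x). -/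
lemma exists_supergradient (r : ℝ) (f : ℝ → ℝ)
    (hconc : ConcaveOn ℝ (Set.Icc 0 r) f)
    (hmono : MonotoneOn f (Set.Icc 0 r)) (a : ℝ) (ha : 0 < a) (har : a ≤ r) :
    ∃ s : ℝ, ∀ x ∈ Set.Icc (0 : ℝ) r, f x ≤ f a + s * (x - a) := by
  rcases har.eq_or_lt with h | h
  · subst h
    refine ⟨0, fun x hx => ?_⟩
    have := hmono hx ⟨ha.le, le_refl _⟩ hx.2
    linarith
  · have key : ∀ x y, 0 ≤ x → x < a → a < y → y ≤ r →
        (f y - f a) / (y - a) ≤ (f a - f x) / (a - x) := by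
      intro x y h0 h1 h2 h3
      exact hconc.slope_anti_adjacent ⟨h0, by linarith⟩ ⟨by linarith, h3⟩ h1 h2
    let S : Set ℝ := (fun y => (f y - f a) / (y - a)) '' Set.Ioc a r
    have hne : S.Nonempty := ⟨_, r, ⟨h, le_refl _⟩, rfl⟩
    have hub : ∀ x, 0 ≤ x → x < a → (f a - f x) / (a - x) ∈ upperBounds S := by
      rintro x h0 h1 _ ⟨y, hy, rfl⟩
      exact key x y h0 h1 hy.1 hy.2
    refine ⟨sSup S, fun x hx => ?_⟩
    rcases lt_trichotomy x a with h1 | h1 | h1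
    · have := csSup_le hne (hub x hx.1 h1)
      rw [le_div_iff₀ (by linarith)] at this
      linarith
    · subst h1; simp
    · have : (f x - f a) / (x - a) ≤ sSup S :=
        le_csSup ⟨_, hub 0 le_rfl ha⟩ ⟨x, ⟨h1, hx.2⟩, rfl⟩
      rw [div_le_iff₀ (by linarith)] at this
      linarith

/-- **Logarithmically many linear pieces cover a concave function (cf. Theorem 4.1).**
Let `ε > 0`, let `r ≥ 1` be real, and let `f : [0,r] → ℝ` be concave, nondecreasing, and
nonnegative with `f 0 = 0`. Then there is a finite set `L` of affine functions (as
slope-intercept pairs) with `|L| ≤ max(1, ⌈log_{1+ε} r⌉)` such that every `g ∈ L` upper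
bounds `f` on `[0,r]`, and every `x ∈ [1,r]` is `(1+ε)`-approximated by some `g ∈ L`. -/
theorem concave_log_cover
    (ε : ℝ) (hε : 0 < ε) (r : ℝ) (hr : 1 ≤ r) (f : ℝ → ℝ)
    (hconc : ConcaveOn ℝ (Set.Icc 0 r) f)
    (hmono : MonotoneOn f (Set.Icc 0 r))
    (hnn : ∀ x ∈ Set.Icc (0 : ℝ) r, 0 ≤ f x)
    (hf0 : f 0 = 0) :
    ∃ L : Finset (ℝ × ℝ),
      (L.card : ℤ) ≤ max 1 ⌈Real.logb (1 + ε) r⌉ ∧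
      (∀ g ∈ L, ∀ x ∈ Set.Icc (0 : ℝ) r, f x ≤ g.1 * x + g.2) ∧
      (∀ x ∈ Set.Icc (1 : ℝ) r, ∃ g ∈ L, g.1 * x + g.2 ≤ (1 + ε) * f x) := by
  classical
  have hq : 1 < 1 + ε := by linarith
  have hq0 : 0 < 1 + ε := by linarith
  have hapos : ∀ i : ℕ, 0 < min ((1 + ε) ^ i) r := fun i => lt_min (by positivity) (by linarith)
  choose s hs using fun i : ℕ => exists_supergradient r f hconc hmono
    (min ((1 + ε) ^ i) r) (hapos i) (min_le_right _ _)
  let N : ℕ := (max 1 ⌈Real.logb (1 + ε) r⌉).toNat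
  have hN : (N : ℤ) = max 1 ⌈Real.logb (1 + ε) r⌉ :=
    Int.toNat_of_nonneg (le_trans (by norm_num) (le_max_left _ _))
  refine ⟨(Finset.range N).image fun i =>
    (s i, f (min ((1 + ε) ^ i) r) - s i * min ((1 + ε) ^ i) r), ?_, ?_, ?_⟩
  · rw [← hN]
    have := Finset.card_image_le (s := Finset.range N) (f := fun i =>
      (s i, f (min ((1 + ε) ^ i) r) - s i * min ((1 + ε) ^ i) r))
    rw [Finset.card_range] at this
    exact_mod_cast this
  · intro g hg x hx
    obtain ⟨i, -, rfl⟩ := Finset.mem_image.1 hg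
    have := hs i x hx
    simp only
    linarith
  · intro x hx
    have hx0 : 0 < x := by linarith [hx.1]
    have hl0 : 0 ≤ Real.logb (1 + ε) x := Real.logb_nonneg hq hx.1
    obtain ⟨i, hiN, h1, h2⟩ : ∃ i : ℕ, i < N ∧ (1 + ε) ^ i ≤ x ∧ x ≤ (1 + ε) ^ (i + 1) := by
      have hlr : Real.logb (1 + ε) x ≤ Real.logb (1 + ε) r :=
        Real.logb_le_logb_of_le hq hx0 hx.2
      have hc := Nat.le_ceil (Real.logb (1 + ε) x)
      rcases Nat.eq_zero_or_pos ⌈Real.logb (1 + ε) x⌉₊ with h | h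
      · refine ⟨0, ?_, by simpa using hx.1, ?_⟩
        · have := le_max_left 1 ⌈Real.logb (1 + ε) r⌉
          omega
        · rw [h] at hc
          have : x ≤ (1 + ε) ^ ((0 : ℕ) : ℝ) := (Real.logb_le_iff_le_rpow hq hx0).1 hc
          simp at this
          simp; linarith
      · obtain ⟨k, hk⟩ : ∃ k, ⌈Real.logb (1 + ε) x⌉₊ = k + 1 := ⟨_, (Nat.sub_add_cancel h).symm⟩
        have hkl : (k : ℝ) < Real.logb (1 + ε) x := Nat.lt_ceil.1 (by omega)
        rw [hk] at hc
        refine ⟨k, ?_, ?_, ?_⟩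
        · have h3 : (k : ℤ) < ⌈Real.logb (1 + ε) r⌉ := Int.lt_ceil.2 (by push_cast; linarith)
          have := le_max_right 1 ⌈Real.logb (1 + ε) r⌉
          omega
        · have := (Real.le_logb_iff_rpow_le hq hx0).1 hkl.le
          rwa [Real.rpow_natCast] at this
        · have := (Real.logb_le_iff_le_rpow hq hx0).1 hc
          rwa [Real.rpow_natCast] at this
    refine ⟨_, Finset.mem_image.2 ⟨i, Finset.mem_range.2 hiN, rfl⟩, ?_⟩
    have hmin : min ((1 + ε) ^ i) r = (1 + ε) ^ i := min_eq_left (h1.trans hx.2)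
    have hsi := hs i 0 ⟨le_rfl, by linarith⟩
    simp only
    rw [hmin] at hsi ⊢
    have ha : 0 < (1 + ε) ^ i := by positivity
    rw [pow_succ] at h2
    generalize (1 + ε) ^ i = a at *
    have hfa : 0 ≤ f a := hnn a ⟨ha.le, h1.trans hx.2⟩
    have hfx : f a ≤ f x := hmono ⟨ha.le, h1.trans hx.2⟩ ⟨hx0.le, hx.2⟩ h1
    have hle : s i * (x - a) ≤ ε * f a := by
      rcases le_total 0 (s i) with h | h
      · have e1 : s i * (x - a) ≤ s i * (ε * a) := mul_le_mul_of_nonneg_left (by linarith) h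
        have e2 : ε * (s i * a) ≤ ε * f a := mul_le_mul_of_nonneg_left (by linarith) hε.le
        linarith
      · have e1 : s i * (x - a) ≤ 0 := mul_nonpos_of_nonpos_of_nonneg h (by linarith)
        have e2 : 0 ≤ ε * f a := by positivity
        linarith
    have e3 : (1 + ε) * f a ≤ (1 + ε) * f x := mul_le_mul_of_nonneg_left hfx hq0.le
    linarith
end

section
/- Define γ(ε) = (1 + 2ε(2+ε) + 2(1+ε)·√(ε(2+ε)))². For every δ ∈ (0,2) there exists a constant c > 0 depending only on δ such that the following holds for all integers r ≥ 2 and all ε > 0 with ε ≥ r^{−δ}: if L is a finite set of affine functions such that every g ∈ L satisfies g(i) ≥ √i for all integers i ∈ {0,1,…,r}, and for every integer i ∈ {1,…,r} some g ∈ L satisfies g(i) ≤ (1+ε)·√i, then |L| ≥ c·(log r)/(log γ(ε)). (As ε → 0 this lower bound behaves as Ω(ε^{−1/2}·log r).) -/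
/-- The function `γ(ε) = (1 + 2ε(2+ε) + 2(1+ε)√(ε(2+ε)))²` from Magnanti–Stratila. -/
noncomputable def gamEps (ε : ℝ) : ℝ :=
  (1 + 2 * ε * (2 + ε) + 2 * (1 + ε) * Real.sqrt (ε * (2 + ε))) ^ 2

/-- The square root of `γ`. -/
theorem gamEps_sqrt (ε : ℝ) (hε : 0 < ε) :
    ∃ μ : ℝ, 1 < μ ∧ gamEps ε = μ ^ 2 ∧ 2 * ε * μ < (μ - 1) ^ 2 ∧ 2 * Real.sqrt ε ≤ μ - 1 := by
  obtain ⟨q, hqdef⟩ : ∃ q, q = Real.sqrt (ε * (2 + ε)) := ⟨_, rfl⟩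
  have hq0 : 0 < q := by rw [hqdef]; apply Real.sqrt_pos.2; positivity
  have hq2 : q ^ 2 = ε * (2 + ε) := by rw [hqdef]; apply Real.sq_sqrt; positivity
  have hqe : Real.sqrt ε ≤ q := by
    rw [hqdef]; apply Real.sqrt_le_sqrt; nlinarith
  have hμ : 1 + 2 * ε * (2 + ε) + 2 * (1 + ε) * q = (q + 1 + ε) ^ 2 := by nlinarith
  refine ⟨1 + 2 * ε * (2 + ε) + 2 * (1 + ε) * q, ?_, ?_, ?_, ?_⟩
  · have : 0 < 2 * ε * (2 + ε) + 2 * (1 + ε) * q := by positivity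
    linarith
  · rw [hqdef]; rfl
  · have h1 : 1 + 2 * ε * (2 + ε) + 2 * (1 + ε) * q - 1 = 2 * q * (q + 1 + ε) := by nlinarith
    rw [h1, hμ]
    have h2 : (2 * q * (q + 1 + ε)) ^ 2 = 4 * q ^ 2 * (q + 1 + ε) ^ 2 := by ring
    rw [h2, hq2]
    apply mul_lt_mul_of_pos_right _ (by positivity)
    nlinarith
  · have : 0 < ε * q := by positivity
    have : 0 < ε * (2 + ε) := by positivity
    nlinarith

/-- No affine function can cover both ends of a well separated triple. -/
theorem no_common_line (ε μ m d a t b : ℝ) (hε : 0 < ε) (hμ : 1 < μ)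
    (hμε : 2 * ε * μ < (μ - 1) ^ 2) (ha : 0 < a) (hat : μ ^ 2 * a ≤ t) (htb : μ ^ 2 * t ≤ b)
    (h1 : m * a + d ≤ (1 + ε) * Real.sqrt a) (h2 : m * b + d ≤ (1 + ε) * Real.sqrt b)
    (h3 : Real.sqrt t ≤ m * t + d) : False := by
  have hμ0 : 0 < μ := by linarith
  have ht : 0 < t := lt_of_lt_of_le (by positivity) hat
  have hb : 0 < b := lt_of_lt_of_le (by positivity) htb
  have e1 : μ * Real.sqrt a ≤ Real.sqrt t := by
    rw [← Real.sqrt_sq hμ0.le, ← Real.sqrt_mul (by positivity)]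
    exact Real.sqrt_le_sqrt hat
  have e2 : μ * Real.sqrt t ≤ Real.sqrt b := by
    rw [← Real.sqrt_sq hμ0.le, ← Real.sqrt_mul (by positivity)]
    exact Real.sqrt_le_sqrt htb
  have qa := Real.sq_sqrt ha.le
  have qt := Real.sq_sqrt ht.le
  have qb := Real.sq_sqrt hb.le
  have pa := Real.sqrt_pos.2 ha
  have pt := Real.sqrt_pos.2 ht
  have pb := Real.sqrt_pos.2 hb
  generalize Real.sqrt a = x at *
  generalize Real.sqrt t = s at *
  generalize Real.sqrt b = y at *
  subst qa qt qb
  have hxs : x < s := by nlinarith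
  have hsy : s < y := by nlinarith
  have k1 : 0 < s ^ 2 - x ^ 2 := by nlinarith
  have k2 : 0 < y ^ 2 - s ^ 2 := by nlinarith
  have A := mul_le_mul_of_nonneg_left h1 k2.le
  have B := mul_le_mul_of_nonneg_left h2 k1.le
  have C := mul_le_mul_of_nonneg_left h3 (add_pos k1 k2).le
  have D : (y - x) * (s * (x + y)) ≤ (y - x) * ((1 + ε) * (s ^ 2 + x * y)) := by
    nlinarith
  have E := le_of_mul_le_mul_left D (by linarith)
  have F1 : (μ - 1) * s ≤ μ * (s - x) := by nlinarith
  have F2 : (μ - 1) * y ≤ μ * (y - s) := by nlinarith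
  have F : ((μ - 1) * s) * ((μ - 1) * y) ≤ (μ * (s - x)) * (μ * (y - s)) := by
    apply mul_le_mul F1 F2
    · exact mul_nonneg (by linarith) pb.le
    · exact mul_nonneg (by linarith) (by linarith)
  have G : (2 * ε * μ) * (s * y) < (μ - 1) ^ 2 * (s * y) :=
    mul_lt_mul_of_pos_right hμε (by positivity)
  have H1 : μ * s * s ≤ y * s := mul_le_mul_of_nonneg_right e2 pt.le
  have H2 : μ * x * y ≤ s * y := mul_le_mul_of_nonneg_right e1 pb.le
  have H : (ε * μ) * (μ * (s ^ 2 + x * y)) ≤ (ε * μ) * (2 * (s * y)) :=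
    mul_le_mul_of_nonneg_left (by nlinarith) (by positivity)
  have I : (s - x) * (y - s) ≤ ε * (s ^ 2 + x * y) := by nlinarith
  have J := mul_le_mul_of_nonneg_left I (by positivity : 0 ≤ μ ^ 2)
  nlinarith

/-- The sequence of sample points. -/
noncomputable def samplePt (γ : ℝ) (N : ℕ) : ℕ → ℕ
  | 0 => N
  | k + 1 => ⌈γ * (samplePt γ N k : ℝ)⌉₊

theorem samplePt_step (γ : ℝ) (N k : ℕ) :
    γ * (samplePt γ N k : ℝ) ≤ (samplePt γ N (k + 1) : ℝ) := Nat.le_ceil _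

theorem samplePt_mono (γ : ℝ) (hγ : 1 < γ) (N : ℕ) : Monotone (samplePt γ N) := by
  apply monotone_nat_of_le_succ
  intro k
  have h := samplePt_step γ N k
  have h0 : (0 : ℝ) ≤ (samplePt γ N k : ℝ) := Nat.cast_nonneg _
  have : (samplePt γ N k : ℝ) ≤ (samplePt γ N (k + 1) : ℝ) := by nlinarith
  exact_mod_cast this

theorem samplePt_le (γ : ℝ) (hγ : 1 < γ) (N : ℕ) (hN : 1 ≤ (γ - 1) * N) (k : ℕ) :
    (samplePt γ N k : ℝ) ≤ (γ ^ 2) ^ k * N := by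
  induction k with
  | zero => simp [samplePt]
  | succ k ih =>
    have h0 : (0 : ℝ) ≤ (samplePt γ N k : ℝ) := Nat.cast_nonneg _
    have h1 : (samplePt γ N (k + 1) : ℝ) < γ * (samplePt γ N k : ℝ) + 1 :=
      Nat.ceil_lt_add_one (by positivity)
    have h2 : (N : ℝ) ≤ (samplePt γ N k : ℝ) := by
      exact_mod_cast samplePt_mono γ hγ N (Nat.zero_le k)
    have h3 : (samplePt γ N (k + 1) : ℝ) ≤ γ ^ 2 * (samplePt γ N k : ℝ) := by
      have : (γ - 1) * (N : ℝ) ≤ (γ - 1) * (samplePt γ N k : ℝ) :=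
        mul_le_mul_of_nonneg_left h2 (by linarith)
      nlinarith [mul_nonneg (sq_nonneg (γ - 1)) h0]
    calc _ ≤ γ ^ 2 * (samplePt γ N k : ℝ) := h3
      _ ≤ γ ^ 2 * ((γ ^ 2) ^ k * N) := mul_le_mul_of_nonneg_left ih (by positivity)
      _ = _ := by ring

/-- **Lower bound for approximating the square root splitting function (Theorem 4.2).**
For every `δ ∈ (0,2)` there is a constant `c > 0` depending only on `δ` such that for all
integers `r ≥ 2` and all `ε > 0` with `ε ≥ r^{-δ}`: if `L` is a finite set of affine
functions each upper bounding `i ↦ √i` at all integers `i ∈ {0,…,r}`, and every integer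
`i ∈ {1,…,r}` has some `g ∈ L` with `g(i) ≤ (1+ε)·√i`, then
`|L| ≥ c·(log r)/(log γ(ε))`. -/
theorem sqrt_cover_lower_bound :
    ∀ δ : ℝ, 0 < δ → δ < 2 →
    ∃ c : ℝ, 0 < c ∧
      ∀ r : ℕ, 2 ≤ r → ∀ ε : ℝ, 0 < ε → (r : ℝ) ^ (-δ) ≤ ε →
      ∀ L : Finset (ℝ × ℝ),
        (∀ g ∈ L, ∀ i : ℕ, i ≤ r → Real.sqrt (i : ℝ) ≤ g.1 * (i : ℝ) + g.2) →
        (∀ i : ℕ, 1 ≤ i → i ≤ r →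
          ∃ g ∈ L, g.1 * (i : ℝ) + g.2 ≤ (1 + ε) * Real.sqrt (i : ℝ)) →
        c * (Real.log (r : ℝ) / Real.log (gamEps ε)) ≤ (L.card : ℝ) := by
  intro δ hδ0 hδ2
  refine ⟨(1 - δ / 2) / 4, by linarith, ?_⟩
  intro r hr ε hε hrε L hup hcov
  obtain ⟨μ, hμ1, hγμ, hμε, hμs⟩ := gamEps_sqrt ε hε
  obtain ⟨γ, hγdef⟩ : ∃ γ, γ = gamEps ε := ⟨_, rfl⟩
  rw [← hγdef] at hγμ ⊢
  have hγ1 : 1 < γ := by rw [hγμ]; nlinarith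
  have hr0 : (0 : ℝ) < r := by exact_mod_cast (by omega : 0 < r)
  have hr1 : (1 : ℝ) ≤ r := by exact_mod_cast (by omega : 1 ≤ r)
  obtain ⟨R, hR⟩ : ∃ R, R = (r : ℝ) ^ (δ / 2) := ⟨_, rfl⟩
  have hR0 : 0 < R := by rw [hR]; positivity
  have hR1 : 1 ≤ R := by rw [hR]; exact Real.one_le_rpow hr1 (by linarith)
  have hRs : 1 ≤ Real.sqrt ε * R := by
    have h : (r : ℝ) ^ (-(δ / 2)) ≤ Real.sqrt ε := by
      apply Real.le_sqrt_of_sq_le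
      rw [← Real.rpow_natCast, ← Real.rpow_mul hr0.le]
      convert hrε using 2
      push_cast; ring
    rw [Real.rpow_neg hr0.le, ← hR] at h
    rw [inv_le_iff_one_le_mul₀ hR0] at h
    exact h
  have hγs : 4 * Real.sqrt ε ≤ γ - 1 := by
    rw [hγμ]; nlinarith
  have hg0 : 0 < γ - 1 := by linarith
  obtain ⟨N, hN⟩ : ∃ N : ℕ, N = ⌈1 / (γ - 1)⌉₊ := ⟨_, rfl⟩
  have hNpos : 0 < N := by rw [hN]; exact Nat.ceil_pos.2 (by positivity)
  have hN1 : 1 ≤ (γ - 1) * (N : ℝ) := by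
    have : 1 / (γ - 1) ≤ (N : ℝ) := by rw [hN]; exact Nat.le_ceil _
    rwa [div_le_iff₀' hg0] at this
  have hNR : (N : ℝ) ≤ R := by
    rcases le_or_gt (1 / (γ - 1)) 1 with h | h
    · have : N ≤ 1 := by rw [hN]; exact Nat.ceil_le.2 (by simpa using h)
      have : (N : ℝ) ≤ 1 := by exact_mod_cast this
      linarith
    · have h1 : (N : ℝ) < 1 / (γ - 1) + 1 := by
        rw [hN]; exact Nat.ceil_lt_add_one (by positivity)
      have h2 : 1 / (γ - 1) ≤ R / 4 := by
        rw [div_le_iff₀ hg0]; nlinarith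
      linarith
  have hlogγ : 0 < Real.log γ := Real.log_pos hγ1
  have hN0 : (0 : ℝ) < N := by exact_mod_cast hNpos
  have hlogN : Real.log N ≤ δ / 2 * Real.log r := by
    rw [← Real.log_rpow hr0, ← hR]
    exact Real.log_le_log hN0 hNR
  have hlogr : 0 ≤ Real.log r := Real.log_nonneg hr1
  obtain ⟨X, hX⟩ : ∃ X, X = (1 - δ / 2) / 4 * (Real.log r / Real.log γ) := ⟨_, rfl⟩
  rw [← hX]
  have hX0 : 0 ≤ X := by
    rw [hX]
    exact mul_nonneg (by linarith) (div_nonneg hlogr hlogγ.le)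
  have hXγ : 4 * X * Real.log γ = (1 - δ / 2) * Real.log r := by
    rw [hX]; field_simp
  obtain ⟨n, hn⟩ : ∃ n : ℕ, n = ⌊X⌋₊ := ⟨_, rfl⟩
  have hnX : (n : ℝ) ≤ X := by rw [hn]; exact Nat.floor_le hX0
  have hXn : X < n + 1 := by rw [hn]; exact Nat.lt_floor_add_one X
  have hpr : ∀ k, k ≤ 2 * n → samplePt γ N k ≤ r := by
    intro k hk
    have h1 := samplePt_mono γ hγ1 N hk
    refine h1.trans ?_
    have h2 := samplePt_le γ hγ1 N hN1 (2 * n)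
    have h3 : (γ ^ 2) ^ (2 * n) * (N : ℝ) ≤ r := by
      rw [← Real.log_le_log_iff (by positivity) hr0, Real.log_mul (by positivity) (by positivity),
        Real.log_pow, Real.log_pow]
      push_cast
      nlinarith [mul_le_mul_of_nonneg_right hnX hlogγ.le]
    exact_mod_cast h2.trans h3
  have hp1 : ∀ k, 1 ≤ samplePt γ N k := fun k =>
    le_trans hNpos (samplePt_mono γ hγ1 N (Nat.zero_le k))
  have hex : ∀ k : ℕ, ∃ g : ℝ × ℝ, k ≤ n → g ∈ L ∧
      g.1 * (samplePt γ N (2 * k) : ℝ) + g.2 ≤ (1 + ε) * Real.sqrt (samplePt γ N (2 * k) : ℝ) := by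
    intro k
    by_cases hk : k ≤ n
    · obtain ⟨g, hg, h⟩ := hcov _ (hp1 (2 * k)) (hpr (2 * k) (by omega))
      exact ⟨g, fun _ => ⟨hg, h⟩⟩
    · exact ⟨0, fun h => absurd h hk⟩
  choose f hf using hex
  have hne : ∀ i j, i < j → j ≤ n → f i ≠ f j := by
    intro i j hij hj he
    obtain ⟨hi1, hi2⟩ := hf i (by omega)
    obtain ⟨hj1, hj2⟩ := hf j hj
    rw [← he] at hj2
    refine no_common_line ε μ (f i).1 (f i).2 (samplePt γ N (2 * i)) (samplePt γ N (2 * i + 1))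
      (samplePt γ N (2 * j)) hε hμ1 hμε ?_ ?_ ?_ hi2 hj2
      (hup _ hi1 _ (hpr _ (by omega)))
    · exact_mod_cast hp1 (2 * i)
    · rw [← hγμ]; exact samplePt_step γ N (2 * i)
    · rw [← hγμ]
      refine (samplePt_step γ N (2 * i + 1)).trans ?_
      exact_mod_cast samplePt_mono γ hγ1 N (by omega : 2 * i + 1 + 1 ≤ 2 * j)
  have hcard : (Finset.range (n + 1)).card ≤ L.card := by
    apply Finset.card_le_card_of_injOn f
    · intro k hk
      have hk' : k < n + 1 := by simpa using hk
      exact (hf k (by omega)).1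
    · intro i hi j hj he
      have hi' : i < n + 1 := by simpa using hi
      have hj' : j < n + 1 := by simpa using hj
      rcases lt_trichotomy i j with h | h | h
      · exact absurd he (hne i j h (by omega))
      · exact h
      · exact absurd he.symm (hne j i h (by omega))
  rw [Finset.card_range] at hcard
  have : ((n : ℝ) + 1) ≤ L.card := by exact_mod_cast hcard
  linarith
end

section
/- There is an absolute constant C > 0 such that for every real k ≥ 2 and every ε ∈ (0,1) there exists a finite set L of affine functions with |L| ≤ C·ε^{−1/2}·(1 + log₂(1 + log₂(1/ε))), such that every g ∈ L satisfies g(x) ≥ x·(k−x) for all x ∈ [0, k], and for every x ∈ [1, k/2] there exists g ∈ L with g(x) ≤ (1+ε)·x·(k−x). In particular, the clique splitting penalties of a k-node hyperedge can be (1+ε)-covered with O(ε^{−1/2}·log log(1/ε)) linear pieces, independent of k. -/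
/-- **Covering the clique splitting penalty with `O(ε^{-1/2} log log (1/ε))` linear pieces
(Theorem 4.4).** There is an absolute constant `C > 0` such that for every real `k ≥ 2`
and every `ε ∈ (0,1)` there is a finite set `L` of affine functions with
`|L| ≤ C·ε^{-1/2}·(1 + log₂(1 + log₂(1/ε)))` such that every `g ∈ L` satisfies
`g(x) ≥ x(k-x)` on `[0,k]`, and every `x ∈ [1, k/2]` has some `g ∈ L` with
`g(x) ≤ (1+ε)·x(k-x)`. -/
theorem clique_loglog_cover :
    ∃ C : ℝ, 0 < C ∧
      ∀ k : ℝ, 2 ≤ k → ∀ ε : ℝ, 0 < ε → ε < 1 →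
      ∃ L : Finset (ℝ × ℝ),
        (L.card : ℝ) ≤ C * (1 / Real.sqrt ε) *
            (1 + Real.logb 2 (1 + Real.logb 2 (1 / ε))) ∧
        (∀ g ∈ L, ∀ x ∈ Set.Icc (0 : ℝ) k, x * (k - x) ≤ g.1 * x + g.2) ∧
        (∀ x ∈ Set.Icc (1 : ℝ) (k / 2),
          ∃ g ∈ L, g.1 * x + g.2 ≤ (1 + ε) * (x * (k - x))) := by
  refine ⟨3, by norm_num, ?_⟩
  intro k hk ε hε hε1
  -- Tangent lines at the points `(n δ)²`, with `δ = √(ε k / 8)` and `n ≤ 2 / √ε`.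
  obtain ⟨δ, hδ⟩ : ∃ δ, δ = Real.sqrt (ε * k / 8) := ⟨_, rfl⟩
  have hδpos : 0 < δ := by rw [hδ]; apply Real.sqrt_pos.mpr; positivity
  have hδsq : δ ^ 2 = ε * k / 8 := by rw [hδ]; exact Real.sq_sqrt (by positivity)
  have hs : 0 < Real.sqrt ε := Real.sqrt_pos.mpr hε
  have hssq : Real.sqrt ε ^ 2 = ε := Real.sq_sqrt hε.le
  have hs1 : Real.sqrt ε ≤ 1 := by nlinarith
  have h1s : 1 ≤ 1 / Real.sqrt ε := by rw [le_div_iff₀ hs]; linarith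
  refine ⟨(Finset.range (⌊2 / Real.sqrt ε⌋₊ + 1)).image
    (fun n : ℕ => (k - 2 * ((n : ℝ) * δ) ^ 2, ((n : ℝ) * δ) ^ 4)), ?_, ?_, ?_⟩
  · have hcard : (((Finset.range (⌊2 / Real.sqrt ε⌋₊ + 1)).image
        (fun n : ℕ => (k - 2 * ((n : ℝ) * δ) ^ 2, ((n : ℝ) * δ) ^ 4))).card : ℝ)
        ≤ (⌊2 / Real.sqrt ε⌋₊ : ℝ) + 1 := by
      have h := Finset.card_image_le (s := Finset.range (⌊2 / Real.sqrt ε⌋₊ + 1))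
        (f := fun n : ℕ => (k - 2 * ((n : ℝ) * δ) ^ 2, ((n : ℝ) * δ) ^ 4))
      rw [Finset.card_range] at h
      exact_mod_cast h
    have hfl : (⌊2 / Real.sqrt ε⌋₊ : ℝ) ≤ 2 / Real.sqrt ε := Nat.floor_le (by positivity)
    have h2 : 2 / Real.sqrt ε = 2 * (1 / Real.sqrt ε) := by ring
    have hl1 : 0 ≤ Real.logb 2 (1 / ε) :=
      Real.logb_nonneg (by norm_num) (by rw [le_div_iff₀ hε]; linarith)
    have hl2 : 0 ≤ Real.logb 2 (1 + Real.logb 2 (1 / ε)) :=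
      Real.logb_nonneg (by norm_num) (by linarith)
    have h3 : 0 ≤ 3 * (1 / Real.sqrt ε) * Real.logb 2 (1 + Real.logb 2 (1 / ε)) := by
      positivity
    rw [mul_add]
    linarith
  · intro g hg x _
    obtain ⟨n, _, rfl⟩ := Finset.mem_image.mp hg
    simp only
    nlinarith [sq_nonneg (x - ((n : ℝ) * δ) ^ 2)]
  · intro x hx
    obtain ⟨hx1, hx2⟩ := hx
    have hx0 : 0 ≤ x := by linarith
    obtain ⟨u, hu⟩ : ∃ u, u = Real.sqrt x := ⟨_, rfl⟩
    have hu0 : 0 ≤ u := hu ▸ Real.sqrt_nonneg x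
    have husq : u ^ 2 = x := by rw [hu]; exact Real.sq_sqrt hx0
    have hn1 : (⌊u / δ⌋₊ : ℝ) * δ ≤ u := by
      rw [← le_div_iff₀ hδpos]; exact Nat.floor_le (by positivity)
    have hn2 : u ≤ ((⌊u / δ⌋₊ : ℝ) + 1) * δ := by
      rw [← div_le_iff₀ hδpos]; exact (Nat.lt_floor_add_one _).le
    refine ⟨_, Finset.mem_image.mpr ⟨⌊u / δ⌋₊, ?_, rfl⟩, ?_⟩
    · rw [Finset.mem_range, Nat.lt_succ_iff]
      apply Nat.floor_le_floor
      rw [div_le_div_iff₀ hδpos hs]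
      refine (sq_le_sq₀ (by positivity) (by positivity)).mp ?_
      rw [mul_pow, mul_pow, husq, hssq, hδsq]
      nlinarith
    · obtain ⟨s, hsd⟩ : ∃ s, s = (⌊u / δ⌋₊ : ℝ) * δ := ⟨_, rfl⟩
      simp only
      rw [← hsd] at hn1 ⊢
      have hs0 : 0 ≤ s := by rw [hsd]; positivity
      have hd : u - s ≤ δ := by rw [hsd]; linarith
      have ha : (u - s) ^ 2 ≤ δ ^ 2 := pow_le_pow_left₀ (by linarith) hd 2
      have hb : (u + s) ^ 2 ≤ (2 * u) ^ 2 := pow_le_pow_left₀ (by linarith) (by linarith) 2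
      have hc : (u - s) ^ 2 * (u + s) ^ 2 ≤ δ ^ 2 * (2 * u) ^ 2 :=
        mul_le_mul ha hb (sq_nonneg _) (sq_nonneg _)
      have he : (x - s ^ 2) ^ 2 ≤ ε * k / 2 * x := by
        calc (x - s ^ 2) ^ 2 = (u - s) ^ 2 * (u + s) ^ 2 := by rw [← husq]; ring
          _ ≤ δ ^ 2 * (2 * u) ^ 2 := hc
          _ = ε * k / 2 * x := by rw [mul_pow, husq, hδsq]; ring
      have hf : 0 ≤ ε * x * (k / 2 - x) :=
        mul_nonneg (by positivity) (by linarith)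
      nlinarith
end

section
/- For every integer r ≥ 1 and every r-SCB integer function w, there exists an r-CCB function ŵ of order at most ⌈r/2⌉ such that ŵ(i) = w(i) for every i ∈ {0,1,…,r}. (Thus any submodular cardinality-based splitting function can be modeled exactly using at most half as many cardinality-based gadgets as there are distinct cut penalties, rather than r gadgets.) -/
/-- Adding one more gadget with a larger breakpoint. -/
theorem ccb_step (n m J : ℕ) (hnm : n ≤ m) (f : ℕ → ℝ) (c b0 : ℝ) (hc : 0 ≤ c)
    (h1 : (n : ℝ) < b0) (h2 : b0 ≤ m)
    (h : ∃ a b : Fin J → ℝ,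
      (∀ j, 0 < a j) ∧ (∀ j, 0 < b j) ∧ StrictMono b ∧ (∀ j, b j ≤ (n : ℝ)) ∧
      ∀ i : ℕ, f i = ∑ j, a j * min (i : ℝ) (b j)) :
    ∃ J' ≤ J + 1, ∃ a b : Fin J' → ℝ,
      (∀ j, 0 < a j) ∧ (∀ j, 0 < b j) ∧ StrictMono b ∧ (∀ j, b j ≤ (m : ℝ)) ∧
      ∀ i : ℕ, f i + c * min (i : ℝ) b0 = ∑ j, a j * min (i : ℝ) (b j) := by
  obtain ⟨a, b, ha, hb, hmono, hle, hf⟩ := h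
  have hnm' : (n : ℝ) ≤ m := by exact_mod_cast hnm
  have hn0 : (0 : ℝ) ≤ n := Nat.cast_nonneg n
  rcases hc.eq_or_lt with rfl | hc
  · exact ⟨J, by omega, a, b, ha, hb, hmono, fun j => (hle j).trans hnm', by simpa using hf⟩
  · refine ⟨J + 1, le_rfl, Fin.snoc (α := fun _ => ℝ) a c, Fin.snoc (α := fun _ => ℝ) b b0,
      ?_, ?_, ?_, ?_, ?_⟩
    · intro j
      refine Fin.lastCases ?_ (fun j => ?_) j <;> simp [ha, hc]
    · intro j
      refine Fin.lastCases ?_ (fun j => ?_) j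
      · simp; linarith
      · simp [hb]
    · intro x y
      refine Fin.lastCases ?_ (fun y => ?_) y
      · refine Fin.lastCases ?_ (fun x => ?_) x
        · simp
        · intro _
          simpa using (hle x).trans_lt h1
      · refine Fin.lastCases ?_ (fun x => ?_) x
        · intro h
          exact absurd h (not_lt.mpr (Fin.le_last _))
        · intro h
          simpa using hmono (by simpa using h)
    · intro j
      refine Fin.lastCases ?_ (fun j => ?_) j
      · simpa using h2
      · simpa using (hle j).trans hnm'
    · intro i
      simp [Fin.sum_univ_castSucc, hf]

/-- Two gadgets at consecutive integers merge into one. -/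
theorem ccb_merge (n : ℕ) (c d : ℝ) (hc : 0 ≤ c) (hd : 0 ≤ d) :
    ∃ b0 : ℝ, (n : ℝ) < b0 ∧ b0 ≤ (n : ℝ) + 2 ∧ ∀ i : ℕ,
      c * min (i : ℝ) (n + 1) + d * min (i : ℝ) (n + 2) = (c + d) * min (i : ℝ) b0 := by
  rcases (add_nonneg hc hd).eq_or_lt with h | h
  · have h1 : c = 0 := by linarith
    have h2 : d = 0 := by linarith
    exact ⟨n + 1, by linarith, by linarith, by simp [h1, h2]⟩
  · have key : (c + d) * (n + 1 + d / (c + d)) = (c + d) * (n + 1) + d := by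
      field_simp
    have q0 : 0 ≤ d / (c + d) := by positivity
    have q1 : d / (c + d) ≤ 1 := by rw [div_le_one h]; linarith
    refine ⟨n + 1 + d / (c + d), by linarith, by linarith, fun i => ?_⟩
    rcases Nat.lt_or_ge (n + 1) i with hi | hi
    · have hi' : (n : ℝ) + 2 ≤ i := by exact_mod_cast hi
      rw [min_eq_right (by linarith), min_eq_right (by linarith), min_eq_right (by linarith), key]
      ring
    · have hi' : (i : ℝ) ≤ n + 1 := by exact_mod_cast hi
      rw [min_eq_left (by linarith), min_eq_left (by linarith), min_eq_left (by linarith)]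
      ring

theorem ccb_exists (d : ℕ → ℝ) (hd : ∀ j, 0 ≤ d j) : ∀ n : ℕ,
    ∃ J ≤ (n + 1) / 2, ∃ a b : Fin J → ℝ,
      (∀ j, 0 < a j) ∧ (∀ j, 0 < b j) ∧ StrictMono b ∧ (∀ j, b j ≤ (n : ℝ)) ∧
      ∀ i : ℕ, ∑ j ∈ Finset.range n, d j * min (i : ℝ) (j + 1) =
        ∑ j, a j * min (i : ℝ) (b j)
  | 0 => ⟨0, by simp, Fin.elim0, Fin.elim0, fun j => j.elim0, fun j => j.elim0,
      fun j => j.elim0, fun j => j.elim0, by simp⟩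
  | 1 => by
      obtain ⟨J, hJ, h⟩ := ccb_step 0 1 0 (by simp) (fun _ => 0) (d 0) 1 (hd 0) (by simp) (by simp)
        ⟨Fin.elim0, Fin.elim0, fun j => j.elim0, fun j => j.elim0,
          fun j => j.elim0, fun j => j.elim0, by simp⟩
      exact ⟨J, by simpa using hJ, by simpa using h⟩
  | n + 2 => by
      obtain ⟨J, hJ, h⟩ := ccb_exists d hd n
      obtain ⟨b0, h1, h2, h3⟩ := ccb_merge n (d n) (d (n + 1)) (hd _) (hd _)
      obtain ⟨J', hJ', a, b, p1, p2, p3, p4, p5⟩ :=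
        ccb_step n (n + 2) J (by omega) _ (d n + d (n + 1)) b0
        (add_nonneg (hd _) (hd _)) h1 (by push_cast; exact h2) h
      refine ⟨J', by omega, a, b, p1, p2, p3, p4, fun i => ?_⟩
      rw [← p5, ← h3, Finset.sum_range_succ, Finset.sum_range_succ]
      push_cast
      rw [show (n : ℝ) + 1 + 1 = n + 2 by ring]
      ring

/-- **Exact modeling with `⌈r/2⌉` CB-gadgets.** For every integer `r ≥ 1` and every
`r`-SCB integer function `w`, there is an `r`-CCB function `ŵ` of order at most
`⌈r/2⌉ = (r+1)/2` that agrees with `w` on all of `{0,1,…,r}`. -/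
theorem exact_ccb_half (r : ℕ) (hr : 1 ≤ r) (w : ℕ → ℝ) (hw : IsSCB r w) :
    ∃ (J : ℕ) (what : ℕ → ℝ),
      J ≤ (r + 1) / 2 ∧ IsCCB r J what ∧ ∀ i ≤ r, what i = w i := by
  obtain ⟨w0, wm, wc⟩ := hw
  obtain ⟨s, hs⟩ : ∃ s : ℕ → ℝ, ∀ j, s j = if j < r then w (j + 1) - w j else 0 :=
    ⟨_, fun _ => rfl⟩
  have hd : ∀ j, 0 ≤ s j - s (j + 1) := by
    intro j
    rw [hs, hs]
    by_cases h1 : j + 1 < r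
    · have := wc (j + 1) (by omega) (by omega)
      rw [if_pos h1, if_pos (by omega)]
      simp only [Nat.add_sub_cancel] at this
      linarith
    · rw [if_neg h1]
      split_ifs with h2
      · linarith [wm j h2]
      · simp
  have key : ∀ i n : ℕ, n ≤ r →
      ∑ j ∈ Finset.range n, (s j - s (j + 1)) * min (i : ℝ) (j + 1) =
        w (min i n) - s n * (min i n : ℕ) := by
    intro i n
    induction n with
    | zero => simp [w0]
    | succ n ih =>
      intro hn
      rw [Finset.sum_range_succ, ih (by omega)]
      rcases Nat.lt_or_ge n i with hi | hi
      · have hi' : (n : ℝ) + 1 ≤ i := by exact_mod_cast hi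
        have := hs n
        rw [if_pos (by omega)] at this
        rw [min_eq_right hi', Nat.min_eq_right (by omega), Nat.min_eq_right (by omega)]
        push_cast
        linear_combination this
      · have hi' : (i : ℝ) ≤ n := by exact_mod_cast hi
        rw [min_eq_left (show (i : ℝ) ≤ n + 1 by linarith), Nat.min_eq_left (by omega), Nat.min_eq_left (by omega)]
        ring
  obtain ⟨J, hJ, a, b, p1, p2, p3, p4, p5⟩ := ccb_exists (fun j => s j - s (j + 1)) hd r
  refine ⟨J, w, hJ, ⟨a, b, p1, p2, p3, p4, fun i hi => ?_⟩, fun _ _ => rfl⟩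
  rw [← p5, key i r le_rfl, Nat.min_eq_left hi, hs r]
  simp
end

section
/- Let k > 0 be real, let J ≥ 0 be an integer, and let f : [0,k] → ℝ be nonnegative, concave, and piecewise linear with exactly J+1 linear pieces: there are breakpoints 0 = b_0 < b_1 < … < b_J < b_{J+1} = k such that f is affine with slope m_t on [b_{t−1}, b_t] for t = 1,…,J+1 and m_1 > m_2 > … > m_{J+1}. Set z_0 = f(0)/k, z_k = f(k)/k, and a_j = (m_j − m_{j+1})/k for j = 1,…,J. Then z_0 ≥ 0, z_k ≥ 0, a_j > 0 for all j, and f(x) = z_0·(k−x) + z_k·x + Σ_{j=1}^J a_j·min(x·(k−b_j), (k−x)·b_j) for all x ∈ [0,k]; that is, f is the continuous extension of the k-CG function of order J with these parameters. -/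
/-- **Every admissible piecewise linear function is the continuous extension of a `k`-CG
function (Lemma B.3).** Let `k > 0`, `J ≥ 0`, and let `f : [0,k] → ℝ` be nonnegative,
concave, and piecewise linear with exactly `J+1` linear pieces: breakpoints
`0 = b_0 < b_1 < … < b_J < b_{J+1} = k`, slope `m_t` on `[b_{t-1}, b_t]` for
`t = 1,…,J+1`, and `m_1 > m_2 > … > m_{J+1}`. Setting `z₀ = f(0)/k`, `z_k = f(k)/k`, and
`a_j = (m_j - m_{j+1})/k`, we have `z₀, z_k ≥ 0`, `a_j > 0`, and
`f(x) = z₀(k-x) + z_k·x + ∑_{j=1}^J a_j·min(x(k-b_j), (k-x)b_j)` for all `x ∈ [0,k]`. -/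
theorem piecewise_linear_is_cg_extension
    (k : ℝ) (hk : 0 < k) (J : ℕ)
    (f : ℝ → ℝ) (b m : ℕ → ℝ)
    (hnn : ∀ x ∈ Set.Icc 0 k, 0 ≤ f x)
    (hconc : ConcaveOn ℝ (Set.Icc 0 k) f)
    (hb0 : b 0 = 0) (hbtop : b (J + 1) = k)
    (hbmono : ∀ t, t ≤ J → b t < b (t + 1))
    (haffine : ∀ t ∈ Finset.Icc 1 (J + 1), ∀ x ∈ Set.Icc (b (t - 1)) (b t),
      f x = f (b (t - 1)) + m t * (x - b (t - 1)))
    (hmdec : ∀ t, 1 ≤ t → t ≤ J → m (t + 1) < m t) :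
    0 ≤ f 0 / k ∧ 0 ≤ f k / k ∧
    (∀ j ∈ Finset.Icc 1 J, 0 < (m j - m (j + 1)) / k) ∧
    (∀ x ∈ Set.Icc 0 k,
      f x = (f 0 / k) * (k - x) + (f k / k) * x
        + ∑ j ∈ Finset.Icc 1 J, ((m j - m (j + 1)) / k)
            * min (x * (k - b j)) ((k - x) * b j)) := by
  have key : ∀ n, n ≤ J →
      0 ≤ b (n + 1) ∧
      (∀ x, 0 ≤ x → x ≤ b (n + 1) →
        f x = f 0 + m 1 * x - ∑ j ∈ Finset.Icc 1 n, (m j - m (j + 1)) * max (x - b j) 0) ∧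
      (∀ x, b (n + 1) ≤ x →
        f 0 + m 1 * x - ∑ j ∈ Finset.Icc 1 n, (m j - m (j + 1)) * max (x - b j) 0
          = f (b (n + 1)) + m (n + 1) * (x - b (n + 1))) := by
    intro n
    induction n with
    | zero =>
      intro _
      have h1 := hbmono 0 (Nat.zero_le _)
      have h2 := haffine 1 (by simp)
      simp only [Nat.sub_self, hb0, sub_zero, zero_add] at h1 h2 ⊢
      refine ⟨h1.le, ?_, ?_⟩
      · intro x hx0 hx1
        simpa using h2 x ⟨hx0, hx1⟩
      · intro x hx
        have h3 := h2 (b 1) ⟨h1.le, le_rfl⟩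
        simp
        linarith
    | succ n ih =>
      intro hn
      obtain ⟨hb, hA, hB⟩ := ih (by omega)
      have h1 := hbmono (n + 1) hn
      have h2 := haffine (n + 1 + 1) (by simp; omega)
      simp only [Nat.add_sub_cancel] at h2
      have h3 := h2 (b (n + 1 + 1)) ⟨h1.le, le_rfl⟩
      refine ⟨by linarith, ?_, ?_⟩
      · intro x hx0 hx1
        rw [Finset.sum_Icc_succ_top (by omega)]
        rcases le_total x (b (n + 1)) with h | h
        · rw [max_eq_right (by linarith : x - b (n + 1) ≤ 0)]
          have := hA x hx0 h
          linarith
        · rw [max_eq_left (by linarith : 0 ≤ x - b (n + 1))]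
          have h4 := hB x h
          have h5 := h2 x ⟨h, hx1⟩
          linarith
      · intro x hx
        rw [Finset.sum_Icc_succ_top (by omega),
          max_eq_left (by linarith : 0 ≤ x - b (n + 1))]
        have h4 := hB x (by linarith)
        linarith
  obtain ⟨-, hF, -⟩ := key J le_rfl
  rw [hbtop] at hF
  have hbk : ∀ i, i ≤ J + 1 → b (J + 1 - i) ≤ k := by
    intro i
    induction i with
    | zero => intro _; simp [hbtop]
    | succ i ih =>
      intro hi
      have h1 := hbmono (J + 1 - (i + 1)) (by omega)
      rw [show J + 1 - (i + 1) + 1 = J + 1 - i by omega] at h1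
      have := ih (by omega)
      linarith
  refine ⟨div_nonneg (hnn 0 ⟨le_rfl, hk.le⟩) hk.le, div_nonneg (hnn k ⟨hk.le, le_rfl⟩) hk.le,
    ?_, ?_⟩
  · intro j hj
    rw [Finset.mem_Icc] at hj
    exact div_pos (sub_pos.2 (hmdec j hj.1 hj.2)) hk
  · rintro x ⟨hx0, hxk⟩
    have hmin : ∀ j, min (x * (k - b j)) ((k - x) * b j)
        = x * (k - b j) - k * max (x - b j) 0 := by
      intro j
      rcases le_total x (b j) with h | h
      · rw [max_eq_right (by linarith), min_eq_left (by nlinarith)]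
        ring
      · rw [max_eq_left (by linarith), min_eq_right (by nlinarith)]
        ring
    have hsum : ∑ j ∈ Finset.Icc 1 J, ((m j - m (j + 1)) / k)
            * min (x * (k - b j)) ((k - x) * b j)
        = x / k * (∑ j ∈ Finset.Icc 1 J, (m j - m (j + 1)) * max (k - b j) 0)
          - ∑ j ∈ Finset.Icc 1 J, (m j - m (j + 1)) * max (x - b j) 0 := by
      rw [Finset.mul_sum, ← Finset.sum_sub_distrib]
      refine Finset.sum_congr rfl fun j hj => ?_
      rw [Finset.mem_Icc] at hj
      have h1 := hbk (J + 1 - j) (by omega)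
      rw [show J + 1 - (J + 1 - j) = j by omega] at h1
      rw [hmin, max_eq_left (by linarith : 0 ≤ k - b j)]
      field_simp
    rw [hsum, hF x hx0 hxk, hF k hk.le le_rfl]
    field_simp
    ring
end

section
/- There is an absolute constant c > 0 such that for every ε > 0, every integer k ≥ 2, and every k-GSCB integer function w (that is, w : {0,1,…,k} → ℝ≥0 with 2·w(i) ≥ w(i−1) + w(i+1) for all i ∈ {1,…,k−1}; no symmetry and no vanishing at the endpoints is assumed), there exist z_0, z_k ≥ 0, an integer J ≤ c·(1 + log_{1+ε} k), and parameters a_j > 0 (j = 1,…,J) with 0 < b_1 < … < b_J < k, such that the k-CG function ŵ(i) = z_0·(k−i) + z_k·i + Σ_{j=1}^J a_j·min(i·(k−b_j), (k−i)·b_j) satisfies w(i) ≤ ŵ(i) ≤ (1+ε)·w(i) for all i ∈ {0,1,…,k}. -/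
/-- The `k`-CG function of order `J` with parameters `z0, zk, a, b`, modeling a
combination of `J` asymmetric cardinality-based gadgets plus source/sink edges. -/
noncomputable def cgFun (k : ℕ) (z0 zk : ℝ) (J : ℕ) (a b : ℕ → ℝ) (i : ℕ) : ℝ :=
  z0 * ((k : ℝ) - (i : ℝ)) + zk * (i : ℝ)
    + ∑ j ∈ Finset.Icc 1 J, a j * min ((i : ℝ) * ((k : ℝ) - b j)) (((k : ℝ) - (i : ℝ)) * b j)

noncomputable def gad (k b x : ℝ) : ℝ := min (x * (k - b)) ((k - x) * b)

lemma gscb_decomp_left (k : ℝ) (w : ℕ → ℝ) (i : ℕ) (hik : (i : ℝ) ≤ k) (n : ℕ) (hn : n ≤ i) :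
    ∑ b ∈ Finset.Icc 1 n, (2 * w b - w (b - 1) - w (b + 1)) * gad k b i
      = (k - i) * ((n + 1) * w n - n * w (n + 1) - w 0) := by
  induction n with
  | zero => simp
  | succ n ih =>
    rw [Finset.sum_Icc_succ_top (by omega), ih (by omega)]
    have h : gad k ((n + 1 : ℕ) : ℝ) i = (k - i) * ((n + 1 : ℕ) : ℝ) := by
      unfold gad
      apply min_eq_right
      have h1 : ((n + 1 : ℕ) : ℝ) ≤ i := by exact_mod_cast hn
      nlinarith
    rw [h]
    simp only [Nat.add_sub_cancel]
    push_cast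
    ring

lemma gscb_decomp_right (k : ℝ) (hk : 0 ≤ k) (w : ℕ → ℝ) (i : ℕ) (hik : (i : ℝ) ≤ k) (n : ℕ)
    (hn : i ≤ n) :
    ∑ b ∈ Finset.Icc 1 n, (2 * w b - w (b - 1) - w (b + 1)) * gad k b i
      = k * w i - (k - i) * w 0 + i * ((k - n - 1) * w n - (k - n) * w (n + 1)) := by
  induction n, hn using Nat.le_induction with
  | base => rw [gscb_decomp_left k w i hik i le_rfl]; ring
  | succ n hn ih =>
    rw [Finset.sum_Icc_succ_top (by omega), ih]
    have h : gad k ((n + 1 : ℕ) : ℝ) i = i * (k - ((n + 1 : ℕ) : ℝ)) := by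
      unfold gad
      apply min_eq_left
      have h1 : (i : ℝ) ≤ ((n + 1 : ℕ) : ℝ) := by exact_mod_cast (by omega : i ≤ n + 1)
      nlinarith
    rw [h]
    simp only [Nat.add_sub_cancel]
    push_cast
    ring

lemma gscb_decomp (k : ℕ) (hk : 2 ≤ k) (w : ℕ → ℝ) (i : ℕ) (hik : i ≤ k) :
    ∑ b ∈ Finset.Icc 1 (k - 1), (2 * w b - w (b - 1) - w (b + 1)) * gad k b i
      = k * w i - (k - i) * w 0 - i * w k := by
  have hik' : (i : ℝ) ≤ k := by exact_mod_cast hik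
  obtain ⟨n, rfl⟩ : ∃ n, k = n + 1 := ⟨k - 1, by omega⟩
  simp only [Nat.add_sub_cancel]
  rcases Nat.lt_or_ge n i with h | h
  · have : i = n + 1 := by omega
    subst this
    rw [gscb_decomp_left _ w (n + 1) hik' n (by omega)]
    push_cast; ring
  · rw [gscb_decomp_right _ (by positivity) w i hik' n h]
    push_cast; ring

/-- Rounding down the breakpoint of a gadget. -/
lemma gad_round (k b p x : ℝ) (hp : 0 < p) (hpb : p ≤ b) (hbk : b < k) (hx : 0 ≤ x) (hxk : x ≤ k) :
    gad k b x ≤ b / p * gad k p x ∧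
      b / p * gad k p x ≤ (b / p) * ((k - p) / (k - b)) * gad k b x := by
  have hb : 0 < b := by linarith
  have hkb : 0 < k - b := by linarith
  have hr : 1 ≤ b / p := by rw [le_div_iff₀ hp]; linarith
  have hs : 1 ≤ (k - p) / (k - b) := by rw [le_div_iff₀ hkb]; linarith
  constructor
  · unfold gad
    rw [mul_min_of_nonneg _ _ (by positivity)]
    apply min_le_min
    · have : 0 ≤ x * (k - p) := mul_nonneg hx (by linarith)
      nlinarith
    · apply le_of_eq; field_simp
  · rw [mul_assoc]
    apply mul_le_mul_of_nonneg_left _ (by positivity)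
    unfold gad
    rw [mul_min_of_nonneg _ _ (by positivity)]
    apply min_le_min
    · apply le_of_eq; field_simp
    · have : 0 ≤ (k - x) * b := mul_nonneg (by linarith) hb.le
      have : (k - x) * p ≤ (k - x) * b := mul_le_mul_of_nonneg_left hpb (by linarith)
      nlinarith

/-- Enumerating a finite set of reals in increasing order. -/
lemma enum_finset (P : Finset ℝ) (A : ℝ → ℝ) :
    ∃ a b : ℕ → ℝ,
      (∀ j, 1 ≤ j → j ≤ P.card → b j ∈ P ∧ a j = A (b j)) ∧
      (∀ j, 1 ≤ j → j < P.card → b j < b (j + 1)) ∧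
      ∀ F : ℝ → ℝ, ∑ j ∈ Finset.Icc 1 P.card, a j * F (b j) = ∑ q ∈ P, A q * F q := by
  let e := P.orderEmbOfFin rfl
  let b : ℕ → ℝ := fun j => if h : j - 1 < P.card then e ⟨j - 1, h⟩ else 0
  have hb : ∀ j (h : j < P.card), b (j + 1) = e ⟨j, h⟩ := by
    intro j h
    simp [b, h]
  refine ⟨fun j => A (b j), b, ?_, ?_, ?_⟩
  · intro j h1 h2
    obtain ⟨m, rfl⟩ : ∃ m, j = m + 1 := ⟨j - 1, by omega⟩
    refine ⟨?_, rfl⟩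
    rw [hb m (by omega)]
    exact P.orderEmbOfFin_mem rfl _
  · intro j h1 h2
    obtain ⟨m, rfl⟩ : ∃ m, j = m + 1 := ⟨j - 1, by omega⟩
    rw [hb m (by omega), hb (m + 1) h2]
    apply e.strictMono
    simp [Fin.lt_def]
  · intro F
    have h1 : ∑ j ∈ Finset.Icc 1 P.card, A (b j) * F (b j)
        = ∑ j ∈ Finset.range P.card, A (b (j + 1)) * F (b (j + 1)) := by
      rw [Finset.range_eq_Ico, Finset.sum_Ico_add' (fun j => A (b j) * F (b j)) 0 P.card 1]
      rfl
    rw [h1, Finset.sum_range]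
    have h2 : ∑ q ∈ P, A q * F q = ∑ q ∈ Finset.univ.image e, A q * F q := by
      congr 1
      ext q
      have := P.range_orderEmbOfFin rfl
      have h3 : q ∈ Set.range (P.orderEmbOfFin rfl) ↔ q ∈ (P : Set ℝ) := by rw [this]
      simpa [e] using h3.symm
    rw [h2, Finset.sum_image (fun x _ y _ h => e.injective h)]
    apply Finset.sum_congr rfl
    intro j _
    rw [hb j j.2]

lemma grid_exists (ε : ℝ) (hε : 0 < ε) (k : ℕ) (hk : 2 ≤ k) :
    ∃ (p : ℕ → ℝ), 
      ((Finset.image p (Finset.Icc 1 (k - 1))).card : ℝ) ≤ 2 * (1 + Real.logb (1 + ε) k) ∧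
      ∀ b ∈ Finset.Icc 1 (k - 1), 0 < p b ∧ p b ≤ b ∧
        ((b : ℝ) / p b) * ((k - p b) / (k - b)) ≤ 1 + ε := by
  have h1ε : 1 < 1 + ε := by linarith
  have h0ε : 0 < 1 + ε := by linarith
  have hk0 : (0 : ℝ) < k := by exact_mod_cast (by omega : 0 < k)
  let g : ℤ → ℝ := fun m => k * (1 + ε) ^ m / (1 + (1 + ε) ^ m)
  let μ : ℕ → ℤ := fun b => ⌊Real.logb (1 + ε) ((b : ℝ) / (k - b))⌋
  set L := Real.logb (1 + ε) k with hL
  have hL0 : 0 ≤ L := Real.logb_nonneg h1ε (by exact_mod_cast (by omega : 1 ≤ k))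
  have hbb : ∀ b ∈ Finset.Icc 1 (k - 1), (1 : ℝ) ≤ b ∧ (1 : ℝ) ≤ k - b := by
    intro b hb
    rw [Finset.mem_Icc] at hb
    have h2 : ((b + 1 : ℕ) : ℝ) ≤ k := by exact_mod_cast (by omega : b + 1 ≤ k)
    push_cast at h2
    exact ⟨by exact_mod_cast hb.1, by linarith⟩
  refine ⟨fun b => g (μ b), ?_, ?_⟩
  · have hsub : Finset.image (fun b => g (μ b)) (Finset.Icc 1 (k - 1))
        ⊆ (Finset.Icc ⌊-L⌋ ⌊L⌋).image g := by
      intro q hq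
      rw [Finset.mem_image] at hq
      obtain ⟨b, hb, rfl⟩ := hq
      apply Finset.mem_image_of_mem
      obtain ⟨hb1, hb2⟩ := hbb b hb
      rw [Finset.mem_Icc]
      constructor
      · apply Int.floor_le_floor
        rw [hL, ← Real.logb_inv]
        apply Real.logb_le_logb_of_le h1ε (by positivity)
        rw [le_div_iff₀ (by linarith), inv_mul_le_iff₀ hk0]
        nlinarith
      · apply Int.floor_le_floor
        apply Real.logb_le_logb_of_le h1ε (div_pos (by linarith) (by linarith))
        rw [div_le_iff₀ (by linarith)]
        nlinarith
    have hc := (Finset.card_le_card hsub).trans Finset.card_image_le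
    rw [Int.card_Icc] at hc
    have hle : ⌊-L⌋ ≤ ⌊L⌋ := Int.floor_le_floor (by linarith)
    have hc' : ((Finset.image (fun b => g (μ b)) (Finset.Icc 1 (k - 1))).card : ℤ)
        ≤ ⌊L⌋ + 1 - ⌊-L⌋ := by omega
    have hc'' : ((Finset.image (fun b => g (μ b)) (Finset.Icc 1 (k - 1))).card : ℝ)
        ≤ (⌊L⌋ : ℝ) + 1 - (⌊-L⌋ : ℝ) := by exact_mod_cast hc'
    have := Int.floor_le L
    have := Int.lt_floor_add_one (-L)
    linarith
  · intro b hb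
    obtain ⟨hb1, hb2⟩ := hbb b hb
    have hb0 : (0 : ℝ) < b := by linarith
    have hkb : (0 : ℝ) < k - b := by linarith
    have hu : 0 < (b : ℝ) / (k - b) := div_pos hb0 hkb
    have ht : 0 < (1 + ε) ^ (μ b) := zpow_pos h0ε _
    have hlo : (1 + ε) ^ (μ b) ≤ (b : ℝ) / (k - b) := by
      have := Int.floor_le (Real.logb (1 + ε) ((b : ℝ) / (k - b)))
      rw [Real.le_logb_iff_rpow_le h1ε hu, Real.rpow_intCast] at this
      exact this
    have hhi : (b : ℝ) / (k - b) ≤ (1 + ε) ^ (μ b) * (1 + ε) := by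
      have := (Int.lt_floor_add_one (Real.logb (1 + ε) ((b : ℝ) / (k - b)))).le
      rw [Real.logb_le_iff_le_rpow h1ε hu, Real.rpow_add h0ε, Real.rpow_intCast,
        Real.rpow_one] at this
      exact this
    simp only [g]
    set t := (1 + ε) ^ (μ b)
    rw [le_div_iff₀ hkb] at hlo
    refine ⟨by positivity, ?_, ?_⟩
    · rw [div_le_iff₀ (by positivity)]
      nlinarith
    · have : (b : ℝ) / (k * t / (1 + t)) * ((k - k * t / (1 + t)) / (k - b))
          = (b : ℝ) / (k - b) / t := by
        field_simp
        ring
      rw [this, div_le_iff₀ ht]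
      linarith

/-- **Sparse approximation of generalized SCB functions (Lemma B.5).** There is an
absolute constant `c > 0` such that for every `ε > 0`, every integer `k ≥ 2`, and every
`k`-GSCB integer function `w` (i.e. `w : {0,…,k} → ℝ≥0` with `2w(i) ≥ w(i-1) + w(i+1)`
for `1 ≤ i ≤ k-1`; no symmetry and no vanishing at the endpoints assumed), there exist
`z₀, z_k ≥ 0`, an order `J ≤ c·(1 + log_{1+ε} k)`, and parameters `a_j > 0`,
`0 < b_1 < … < b_J < k` such that the corresponding `k`-CG function `ŵ` satisfies
`w(i) ≤ ŵ(i) ≤ (1+ε)·w(i)` for all `i ∈ {0,…,k}`. -/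
theorem gscb_sparse_cg_approximation :
    ∃ c : ℝ, 0 < c ∧
      ∀ ε : ℝ, 0 < ε → ∀ k : ℕ, 2 ≤ k → ∀ w : ℕ → ℝ,
        (∀ i ≤ k, 0 ≤ w i) →
        (∀ i, 1 ≤ i → i + 1 ≤ k → w (i - 1) + w (i + 1) ≤ 2 * w i) →
        ∃ (z0 zk : ℝ) (J : ℕ) (a b : ℕ → ℝ),
          0 ≤ z0 ∧ 0 ≤ zk ∧
          (J : ℝ) ≤ c * (1 + Real.logb (1 + ε) (k : ℝ)) ∧
          (∀ j, 1 ≤ j → j ≤ J → 0 < a j) ∧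
          (∀ j, 1 ≤ j → j ≤ J → 0 < b j ∧ b j < k) ∧
          (∀ j, 1 ≤ j → j < J → b j < b (j + 1)) ∧
          ∀ i ≤ k, w i ≤ cgFun k z0 zk J a b i ∧
            cgFun k z0 zk J a b i ≤ (1 + ε) * w i := by
  refine ⟨2, by norm_num, ?_⟩
  intro ε hε k hk w hw hconc
  obtain ⟨p, hcard, hp⟩ := grid_exists ε hε k hk
  have hk0 : (0 : ℝ) < k := by exact_mod_cast (by omega : 0 < k)
  set δ : ℕ → ℝ := fun b => (2 * w b - w (b - 1) - w (b + 1)) / k with hδ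
  have hδ0 : ∀ b ∈ Finset.Icc 1 (k - 1), 0 ≤ δ b := by
    intro b hb
    rw [Finset.mem_Icc] at hb
    have := hconc b hb.1 (by omega)
    exact div_nonneg (by linarith) hk0.le
  set S := (Finset.Icc 1 (k - 1)).filter (fun b => 0 < δ b) with hS
  have hSs : S ⊆ Finset.Icc 1 (k - 1) := Finset.filter_subset _ _
  have hbk : ∀ b ∈ Finset.Icc 1 (k - 1), (b : ℝ) < k := by
    intro b hb
    rw [Finset.mem_Icc] at hb
    exact_mod_cast (by omega : b < k)
  set P := S.image p with hP
  set A : ℝ → ℝ := fun q => ∑ b ∈ S with p b = q, δ b * (b / p b) with hA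
  obtain ⟨a, b, hab, hmono, hsum⟩ := enum_finset P A
  have hPcard : (P.card : ℝ) ≤ 2 * (1 + Real.logb (1 + ε) k) := by
    refine le_trans ?_ hcard
    exact_mod_cast Finset.card_le_card (Finset.image_subset_image hSs)
  refine ⟨w 0 / k, w k / k, P.card, a, b, div_nonneg (hw 0 (by omega)) hk0.le,
    div_nonneg (hw k le_rfl) hk0.le, hPcard, ?_, ?_, hmono, ?_⟩
  · intro j h1 h2
    obtain ⟨hm, he⟩ := hab j h1 h2
    rw [he, hA]
    rw [hP, Finset.mem_image] at hm
    obtain ⟨n, hn, hnb⟩ := hm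
    apply Finset.sum_pos
    · intro m hm
      have hmS := (Finset.mem_filter.1 hm).1
      have h3 := (Finset.mem_filter.1 hmS).2
      have h4 := hp m (hSs hmS)
      exact mul_pos h3 (div_pos (lt_of_lt_of_le h4.1 h4.2.1) h4.1)
    · exact ⟨n, Finset.mem_filter.2 ⟨hn, hnb⟩⟩
  · intro j h1 h2
    obtain ⟨hm, he⟩ := hab j h1 h2
    rw [hP, Finset.mem_image] at hm
    obtain ⟨n, hn, hnb⟩ := hm
    have h4 := hp n (hSs hn)
    rw [← hnb]
    exact ⟨h4.1, lt_of_le_of_lt h4.2.1 (hbk n (hSs hn))⟩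
  · intro i hi
    have hi' : (i : ℝ) ≤ k := by exact_mod_cast hi
    have hi0 : (0 : ℝ) ≤ i := Nat.cast_nonneg i
    have hw0 := hw 0 (by omega)
    have hwk := hw k le_rfl
    have hlin : 0 ≤ w 0 / k * ((k : ℝ) - i) + w k / k * i :=
      add_nonneg (mul_nonneg (div_nonneg hw0 hk0.le) (by linarith))
        (mul_nonneg (div_nonneg hwk hk0.le) hi0)
    have hwi : w i = w 0 / k * ((k : ℝ) - i) + w k / k * i + ∑ b ∈ S, δ b * gad k b i := by
      have h1 : ∑ b ∈ S, δ b * gad k b i = ∑ b ∈ Finset.Icc 1 (k - 1), δ b * gad k b i := by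
        apply Finset.sum_subset hSs
        intro m hm hmS
        have : ¬ 0 < δ m := fun h => hmS (Finset.mem_filter.2 ⟨hm, h⟩)
        have : δ m = 0 := le_antisymm (not_lt.1 this) (hδ0 m hm)
        rw [this, zero_mul]
      have h2 : ∑ b ∈ Finset.Icc 1 (k - 1), δ b * gad k b i
          = (∑ b ∈ Finset.Icc 1 (k - 1), (2 * w b - w (b - 1) - w (b + 1)) * gad k b i) / k := by
        rw [Finset.sum_div]
        apply Finset.sum_congr rfl
        intro m _
        simp only [hδ]
        ring
      rw [h1, h2, gscb_decomp k hk w i hi]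
      field_simp
      ring
    have hcg : cgFun k (w 0 / k) (w k / k) P.card a b i
        = w 0 / k * ((k : ℝ) - i) + w k / k * i
          + ∑ b ∈ S, δ b * (b / p b * gad k (p b) i) := by
      have h1 := hsum (fun q => gad k q i)
      have h2 : ∑ q ∈ P, A q * gad k q i = ∑ b ∈ S, δ b * (b / p b * gad k (p b) i) := by
        rw [← Finset.sum_fiberwise_of_maps_to (s := S) (t := P) (g := p)
          (fun m hm => Finset.mem_image_of_mem p hm)]
        apply Finset.sum_congr rfl
        intro q _
        simp only [hA]
        rw [Finset.sum_mul]
        apply Finset.sum_congr rfl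
        intro m hm
        rw [(Finset.mem_filter.1 hm).2]
        ring
      rw [h2] at h1
      rw [← h1]
      rfl
    rw [hcg]
    constructor
    · rw [hwi]
      gcongr with m hm
      · exact hδ0 m (hSs hm)
      · have h4 := hp m (hSs hm)
        exact (gad_round k m (p m) i h4.1 h4.2.1 (hbk m (hSs hm)) hi0 hi').1
    · have h5 : ∑ b ∈ S, δ b * (b / p b * gad k (p b) i)
          ≤ (1 + ε) * ∑ b ∈ S, δ b * gad k b i := by
        rw [Finset.mul_sum]
        apply Finset.sum_le_sum
        intro m hm
        have h4 := hp m (hSs hm)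
        have h6 := (gad_round k m (p m) i h4.1 h4.2.1 (hbk m (hSs hm)) hi0 hi').2
        have hg : 0 ≤ gad k m i := by
          unfold gad
          apply le_min
          · exact mul_nonneg hi0 (by linarith [hbk m (hSs hm)])
          · exact mul_nonneg (by linarith) (Nat.cast_nonneg m)
        have h7 := h6.trans (mul_le_mul_of_nonneg_right h4.2.2 hg)
        have h8 := mul_le_mul_of_nonneg_left h7 (hδ0 m (hSs hm))
        linarith
      rw [hwi]
      nlinarith
end
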